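/- arXiv:1811.07735 — 2 statements merged into one kernel-verified Lean document; each statement's English description precedes it below -/
import Mathlib

section
/- Let ω = A(x,y)dx + B(x,y)dy define a convex homogeneous foliation of degree 4 on ℙ²(ℂ), i.e. A, B ∈ ℂ[x,y] are homogeneous of degree 4 without common factor and every linear factor of D_ω = (∂A/∂x)(∂B/∂y) − (∂A/∂y)(∂B/∂x) divides C_ω = xA + yB. Then ω is linearly conjugate to one of the five 1-forms: ω₁ = y⁴dx − x⁴dy; ω₂ = y³(2x−y)dx + x³(x−2y)dy; ω₃ = y²(6x²+4xy+y²)dx − x³(x+4y)dy; ω₄ = y³(4x+y)dx + x³(x+4y)dy; ω₅ = y²(6x²+4xy+y²)dx + 3x⁴dy. -/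
open MvPolynomial

noncomputable section

/-- Polynomials in two variables `x = X 0`, `y = X 1` over `ℂ`. -/
abbrev P2 : Type := MvPolynomial (Fin 2) ℂ

/-- The inflection polynomial `D_ω = A_x B_y - A_y B_x` of `ω = A dx + B dy`. -/
def Dpoly (A B : P2) : P2 :=
  pderiv 0 A * pderiv 1 B - pderiv 1 A * pderiv 0 B

/-- The tangent cone `C_ω = xA + yB` of `ω = A dx + B dy`. -/
def Cpoly (A B : P2) : P2 := X 0 * A + X 1 * B

/-- `A` and `B` have no common (non-unit) factor. -/
def NoCommonFactor (A B : P2) : Prop := ∀ p : P2, p ∣ A → p ∣ B → IsUnit p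

/-- Convexity: every linear factor of `D_ω` divides `C_ω`. -/
def IsConvexPair (A B : P2) : Prop :=
  ∀ l : P2, l.IsHomogeneous 1 → l ≠ 0 → l ∣ Dpoly A B → l ∣ Cpoly A B

/-- Composition of a polynomial with the linear map `φ(x,y) = (a₁x + a₂y, a₃x + a₄y)`. -/
def comp2 (a₁ a₂ a₃ a₄ : ℂ) (p : P2) : P2 :=
  aeval ![C a₁ * X 0 + C a₂ * X 1, C a₃ * X 0 + C a₄ * X 1] p

/-- `ω = A dx + B dy` is linearly conjugate to `ω' = A' dx + B' dy`:
`φ*ω = λ ω'` for some `φ ∈ GL₂(ℂ)` and `λ ∈ ℂ \ {0}`. -/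
def LinConj (A B A' B' : P2) : Prop :=
  ∃ a₁ a₂ a₃ a₄ lam : ℂ, a₁ * a₄ - a₂ * a₃ ≠ 0 ∧ lam ≠ 0 ∧
    C a₁ * comp2 a₁ a₂ a₃ a₄ A + C a₃ * comp2 a₁ a₂ a₃ a₄ B = C lam * A' ∧
    C a₂ * comp2 a₁ a₂ a₃ a₄ A + C a₄ * comp2 a₁ a₂ a₃ a₄ B = C lam * B'

/-- ω₁ = y⁴dx − x⁴dy -/
def A1 : P2 := X 1 ^ 4
def B1 : P2 := -X 0 ^ 4
/-- ω₂ = y³(2x−y)dx + x³(x−2y)dy -/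
def A2 : P2 := X 1 ^ 3 * (2 * X 0 - X 1)
def B2 : P2 := X 0 ^ 3 * (X 0 - 2 * X 1)
/-- ω₃ = y²(6x²+4xy+y²)dx − x³(x+4y)dy -/
def A3 : P2 := X 1 ^ 2 * (6 * X 0 ^ 2 + 4 * X 0 * X 1 + X 1 ^ 2)
def B3 : P2 := -(X 0 ^ 3 * (X 0 + 4 * X 1))
/-- ω₄ = y³(4x+y)dx + x³(x+4y)dy -/
def A4 : P2 := X 1 ^ 3 * (4 * X 0 + X 1)
def B4 : P2 := X 0 ^ 3 * (X 0 + 4 * X 1)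
/-- ω₅ = y²(6x²+4xy+y²)dx + 3x⁴dy -/
def A5 : P2 := X 1 ^ 2 * (6 * X 0 ^ 2 + 4 * X 0 * X 1 + X 1 ^ 2)
def B5 : P2 := 3 * X 0 ^ 4

/-!
View `ω` as the rational map `(x : y) ↦ (B : -A)` of the projective line: the zeros of `C_ω` are
its fixed points, the zeros of `D_ω` its critical points, so `ω` is convex when every critical
point is fixed. In the chart `y = 1`, with `a = A(t, 1)` and `b = B(t, 1)`, Euler's relation
gives `D_ω = -d (a b' - a' b)`, a multiple of the Wronskian, while `C_ω = t a + b`.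

Move a critical point to infinity. If the Wronskian is squarefree, it divides `t a + b`, and a
degree count together with coprimality forces `a` to be a constant `c`. Then `b' ∣ c t + b`
becomes a linear differential equation for `b`, whose solutions give `ω₅`.

Otherwise there is a multiple critical point; being fixed, it contributes a cube. Moved to
`(1 : 0)`, it makes `A` divisible by `y³`, and the same dichotomy applied once more gives either
`ω₅` or the normal form `y³(αx + βy) dx + x³(γx + δy) dy`. Its two remaining critical points are
the roots of a quadratic. If one of them collides with `(1 : 0)` or `(0 : 1)` then `αδ = 0`, which
leads to `ω₁` and `ω₃`; otherwise a double root leads to `ω₂` and two distinct roots lead to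
`ω₄`.
-/

section Univariate

open Polynomial (derivative wronskian)

variable {K : Type*} [Field K]

lemma dvd_of_squarefree_of_forall_isRoot [IsAlgClosed K] {p q : Polynomial K}
    (hp : Squarefree p) (h : ∀ r, p.IsRoot r → q.IsRoot r) : p ∣ q := by
  obtain rfl | hq := eq_or_ne q 0
  · exact dvd_zero p
  rw [IsAlgClosed.dvd_iff_roots_le_roots hp.ne_zero hq, Multiset.le_iff_subset
    (Polynomial.nodup_roots (PerfectField.separable_iff_squarefree.mpr hp))]
  intro r hr
  exact (Polynomial.mem_roots hq).mpr (h r (Polynomial.isRoot_of_mem_roots hr))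

lemma exists_X_sub_C_sq_dvd_of_not_squarefree [IsAlgClosed K] {p : Polynomial K}
    (hp : ¬ Squarefree p) : ∃ r, (Polynomial.X - Polynomial.C r) ^ 2 ∣ p := by
  obtain ⟨q, hqp, hq⟩ : ∃ q, q * q ∣ p ∧ ¬ IsUnit q := by
    simpa only [Squarefree, not_forall, exists_prop] using hp
  obtain rfl | - := eq_or_ne q 0
  · exact ⟨0, by simp [zero_dvd_iff.mp (by simpa using hqp)]⟩
  obtain ⟨r, hr⟩ := IsAlgClosed.exists_root q fun h ↦
    hq (Polynomial.isUnit_iff_degree_eq_zero.mpr h)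
  have hrq := Polynomial.dvd_iff_isRoot.mpr hr
  exact ⟨r, (sq (Polynomial.X - Polynomial.C r)) ▸ (mul_dvd_mul hrq hrq).trans hqp⟩

lemma exists_vieta_quadratic [IsAlgClosed K] [NeZero (2 : K)] {a : K}
    (ha : a ≠ 0) (b c : K) : ∃ r s, b = -(a * (r + s)) ∧ c = a * (r * s) := by
  obtain ⟨w, hw⟩ := IsAlgClosed.exists_eq_mul_self (discrim a b c)
  obtain ⟨r, hr⟩ := exists_quadratic_eq_zero ha ⟨w, hw⟩
  obtain ⟨s, -, hsum, hprod⟩ := vieta_formula_quadratic (b := -(b / a)) (c := c / a) (x := r)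
    (by field_simp; linear_combination hr)
  exact ⟨r, s, by rw [hsum]; field_simp, by rw [hprod]; field_simp⟩

lemma wronskian_self_add_C_mul {R : Type*} [CommRing R] (a b : Polynomial R) (r : R) :
    wronskian a (Polynomial.C r * a + b) = wronskian a b := by
  simp only [wronskian, map_add, Polynomial.derivative_C_mul]
  ring

lemma X_sub_C_pow_succ_dvd_of_dvd_wronskian [CharZero K] {a b : Polynomial K} {r : K}
    (ha : ¬ a.IsRoot r) (hb : b.IsRoot r) {k : ℕ}
    (h : (Polynomial.X - Polynomial.C r) ^ k ∣ wronskian a b) :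
    (Polynomial.X - Polynomial.C r) ^ (k + 1) ∣ b := by
  induction k with
  | zero => simpa [Polynomial.dvd_iff_isRoot] using hb
  | succ k ih =>
    obtain ⟨q, rfl⟩ := ih ((pow_dvd_pow _ k.le_succ).trans h)
    set l := Polynomial.X - Polynomial.C r with hl
    have hl0 : l ≠ 0 := Polynomial.X_sub_C_ne_zero r
    have hW : wronskian a (l ^ (k + 1) * q) =
        l ^ k * ((k + 1 : ℕ) * (a * q)) + l ^ (k + 1) * wronskian a q := by
      simp only [wronskian, Polynomial.derivative_mul, Polynomial.derivative_X_sub_C_pow, hl,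
        Nat.add_sub_cancel, map_natCast]
      ring
    rw [hW, dvd_add_left (dvd_mul_right ..), pow_succ, mul_dvd_mul_iff_left (pow_ne_zero k hl0),
      Polynomial.dvd_iff_isRoot] at h
    have hq : q.IsRoot r := by
      simpa [Polynomial.IsRoot, Nat.cast_add_one_ne_zero, show a.eval r ≠ 0 from ha] using h
    rw [pow_succ]
    exact mul_dvd_mul_left _ (Polynomial.dvd_iff_isRoot.mpr hq)

lemma coeff_wronskian {R : Type*} [CommRing R] {a b : Polynomial R} {m n : ℕ}
    (ha : a.natDegree ≤ m) (hb : b.natDegree ≤ n + 1) :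
    (wronskian a b).coeff (m + n) = (n + 1 - m) * a.coeff m * b.coeff (n + 1) := by
  have hab : (a * derivative b).coeff (m + n) = a.coeff m * (derivative b).coeff n :=
    Polynomial.coeff_mul_add_eq_of_natDegree_le ha
      ((Polynomial.natDegree_derivative_le b).trans (Nat.sub_le_of_le_add hb))
  have hba : (derivative a * b).coeff (m + n) = m * a.coeff m * b.coeff (n + 1) := by
    cases m with
    | zero => simp [Polynomial.derivative_of_natDegree_zero (Nat.le_zero.mp ha)]
    | succ m =>
      rw [add_right_comm, add_assoc, Polynomial.coeff_mul_add_eq_of_natDegree_le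
        ((Polynomial.natDegree_derivative_le a).trans (Nat.sub_le_of_le_add ha)) hb,
        Polynomial.coeff_derivative]
      push_cast
      ring
  rw [wronskian, Polynomial.coeff_sub, hab, hba, Polynomial.coeff_derivative]
  ring

lemma natDegree_wronskian_add_one [CharZero K] {a b : Polynomial K} (ha : a ≠ 0)
    (hab : a.natDegree < b.natDegree) :
    (wronskian a b).natDegree + 1 = a.natDegree + b.natDegree := by
  have hb : b ≠ 0 := Polynomial.ne_zero_of_natDegree_gt hab
  obtain ⟨n, hn⟩ := Nat.exists_eq_succ_of_ne_zero (Nat.ne_zero_of_lt hab)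
  have hlead : (wronskian a b).coeff (a.natDegree + n) ≠ 0 := by
    rw [coeff_wronskian le_rfl hn.le, ← Nat.succ_eq_add_one, ← hn]
    refine mul_ne_zero (mul_ne_zero ?_ (Polynomial.leadingCoeff_ne_zero.mpr ha))
      (Polynomial.leadingCoeff_ne_zero.mpr hb)
    exact sub_ne_zero.mpr (by norm_cast; omega)
  have hle := Polynomial.le_natDegree_of_ne_zero hlead
  have hlt := Polynomial.natDegree_wronskian_lt_add
    (ne_of_apply_ne (Polynomial.coeff · _) (by simpa using hlead))
  omega

lemma exists_eq_wronskian_mul_C_of_dvd [CharZero K] {a b : Polynomial K} (ha : a.natDegree ≠ 0)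
    (hab : a.natDegree + 1 < b.natDegree) (h : wronskian a b ∣ Polynomial.X * a + b) :
    a.natDegree = 1 ∧ ∃ c, Polynomial.X * a + b = wronskian a b * Polynomial.C c := by
  have ha0 : a ≠ 0 := ne_of_apply_ne Polynomial.natDegree (by simpa using ha)
  have hsum : (Polynomial.X * a + b).natDegree = b.natDegree :=
    Polynomial.natDegree_add_eq_right_of_natDegree_lt (by rwa [Polynomial.natDegree_X_mul ha0])
  have hW := natDegree_wronskian_add_one ha0 (Nat.lt_of_succ_lt hab)
  obtain ⟨q, hq⟩ := h
  have hWq : wronskian a b * q ≠ 0 :=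
    hq ▸ Polynomial.ne_zero_of_natDegree_gt (n := 0) (by omega)
  have hdeg := Polynomial.natDegree_mul (left_ne_zero_of_mul hWq) (right_ne_zero_of_mul hWq)
  rw [← hq, hsum] at hdeg
  obtain ⟨c, rfl⟩ := Polynomial.natDegree_eq_zero.mp (by omega : q.natDegree = 0)
  exact ⟨by omega, c, hq⟩

lemma natDegree_eq_zero_of_wronskian_dvd [CharZero K] {a b : Polynomial K} (hcop : IsCoprime a b)
    (hab : a.natDegree + 1 < b.natDegree) (h : wronskian a b ∣ Polynomial.X * a + b) :
    a.natDegree = 0 := by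
  by_contra ha
  obtain ⟨ha1, c, hc⟩ := exists_eq_wronskian_mul_C_of_dvd ha hab h
  obtain ⟨n, hn⟩ := Nat.exists_eq_succ_of_ne_zero (Nat.ne_zero_of_lt hab)
  have ha' : derivative a = Polynomial.C (a.coeff 1) := by
    rw [Polynomial.eq_C_of_natDegree_le_zero
      ((Polynomial.natDegree_derivative_le a).trans (by omega)), Polynomial.coeff_derivative]
    simp
  have hlead : n * a.coeff 1 * c = 1 := by
    have hb : b.coeff (n + 1) ≠ 0 := by
      rw [← Nat.succ_eq_add_one, ← hn, Polynomial.coeff_natDegree,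
        Polynomial.leadingCoeff_ne_zero]
      exact Polynomial.ne_zero_of_natDegree_gt hab
    have hcoeff := congrArg (Polynomial.coeff · (1 + n)) hc
    simp only [Polynomial.coeff_mul_C, coeff_wronskian ha1.le hn.le, Nat.cast_one,
      add_sub_cancel_right, Polynomial.coeff_add] at hcoeff
    rw [add_comm 1 n, Polynomial.coeff_X_mul,
      Polynomial.coeff_eq_zero_of_natDegree_lt (by omega : a.natDegree < n), zero_add] at hcoeff
    exact mul_right_cancel₀ hb (by linear_combination -hcoeff)
  have hne : 1 + c * a.coeff 1 ≠ 0 := by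
    intro h0
    have : (n : K) + 1 = 0 := by linear_combination n * h0 - hlead
    exact Nat.cast_add_one_ne_zero n this
  have hdvd : a ∣ b * Polynomial.C (1 + c * a.coeff 1) := by
    refine ⟨derivative b * Polynomial.C c - Polynomial.X, ?_⟩
    rw [Polynomial.wronskian, ha'] at hc
    simp only [map_add, map_mul, map_one]
    linear_combination hc
  have hunit : IsUnit a := isUnit_of_dvd_unit (hcop.dvd_of_dvd_mul_left hdvd)
    (Polynomial.isUnit_C.mpr hne.isUnit)
  exact ha (Polynomial.natDegree_eq_zero_of_isUnit hunit)

lemma exists_eq_C_mul_pow_of_sub_mul_derivative [CharZero K] (e : K) {n : ℕ} {g : Polynomial K}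
    (h : (Polynomial.X - Polynomial.C e) * derivative g = (n : Polynomial K) * g) :
    ∃ β, g = Polynomial.C β * (Polynomial.X - Polynomial.C e) ^ n := by
  have he : Polynomial.X - Polynomial.C e ≠ 0 := Polynomial.X_sub_C_ne_zero e
  induction n generalizing g with
  | zero =>
    have hg : derivative g = 0 := by simpa [he] using h
    exact ⟨g.coeff 0, by simpa using Polynomial.eq_C_of_derivative_eq_zero hg⟩
  | succ n ih =>
    have hroot : g.IsRoot e := by
      simpa [Nat.cast_add_one_ne_zero] using (congrArg (Polynomial.eval e) h).symm
    obtain ⟨q, rfl⟩ := Polynomial.dvd_iff_isRoot.mpr hroot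
    obtain ⟨β, hβ⟩ := ih (g := q) (mul_left_cancel₀ he (by
      rw [Polynomial.derivative_mul, Polynomial.derivative_X_sub_C, Nat.cast_succ] at h
      linear_combination h))
    exact ⟨β, by rw [hβ]; ring⟩

lemma exists_C_mul_eq_X_sub_C [CharZero K] {b q : Polynomial K} {n : ℕ} {c : K}
    (hn : n ≠ 0) (hb : b.natDegree = n + 1)
    (hq : Polynomial.C c * Polynomial.X + b = derivative b * q) :
    ∃ e, Polynomial.C ((n + 1 : ℕ) : K) * q = Polynomial.X - Polynomial.C e := by
  have hb0 : b ≠ 0 := Polynomial.ne_zero_of_natDegree_gt (n := 0) (by omega)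
  have hlt : (Polynomial.C c * Polynomial.X).degree < b.degree :=
    (Polynomial.degree_C_mul_X_le c).trans_lt (by
      rw [Polynomial.degree_eq_natDegree hb0, hb]; exact_mod_cast (by omega : 1 < n + 1))
  have hsum : (Polynomial.C c * Polynomial.X + b).natDegree = n + 1 := by
    rw [Polynomial.natDegree_add_eq_right_of_degree_lt hlt, hb]
  have hlead : b.leadingCoeff = b.leadingCoeff * (n + 1 : ℕ) * q.leadingCoeff := by
    have := congrArg Polynomial.leadingCoeff hq
    rwa [Polynomial.leadingCoeff_add_of_degree_lt hlt, Polynomial.leadingCoeff_mul,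
      Polynomial.leadingCoeff_derivative, hb] at this
  have hmonic : (Polynomial.C ((n + 1 : ℕ) : K) * q).Monic := by
    rw [Polynomial.Monic, Polynomial.leadingCoeff_mul, Polynomial.leadingCoeff_C]
    refine mul_left_cancel₀ (Polynomial.leadingCoeff_ne_zero.mpr hb0) ?_
    linear_combination -hlead
  have hdeg : (Polynomial.C ((n + 1 : ℕ) : K) * q).natDegree = 1 := by
    have hne : derivative b * q ≠ 0 := hq ▸ Polynomial.ne_zero_of_natDegree_gt (n := 0) (by omega)
    have := Polynomial.natDegree_mul (left_ne_zero_of_mul hne) (right_ne_zero_of_mul hne)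
    rw [← hq, hsum, Polynomial.natDegree_derivative, hb] at this
    rw [Polynomial.natDegree_C_mul (Nat.cast_ne_zero.mpr n.succ_ne_zero)]
    omega
  exact ⟨-(Polynomial.C ((n + 1 : ℕ) : K) * q).coeff 0, by
    rw [Polynomial.C_neg, sub_neg_eq_add, ← hmonic.eq_X_add_C hdeg]⟩

lemma exists_eq_of_derivative_dvd [CharZero K] {b : Polynomial K} {n : ℕ} {c : K}
    (hn : n ≠ 0) (hb : b.natDegree = n + 1)
    (h : derivative b ∣ Polynomial.C c * Polynomial.X + b) :
    ∃ β ≠ 0, ∃ e, b = Polynomial.C β * (Polynomial.X - Polynomial.C e) ^ (n + 1)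
      - Polynomial.C ((n + 1 : ℕ) / n * c) * (Polynomial.X - Polynomial.C e)
      - Polynomial.C (c * e) := by
  obtain ⟨q, hq⟩ := h
  obtain ⟨e, he⟩ := exists_C_mul_eq_X_sub_C hn hb hq
  set κ : K := (n + 1 : ℕ) / n * c
  have hκ : κ * n = (n + 1 : ℕ) * c := by
    simp only [κ]
    field_simp
  have hode : (Polynomial.X - Polynomial.C e) * derivative (b +
      Polynomial.C κ * (Polynomial.X - Polynomial.C e) + Polynomial.C (c * e)) =
      ((n + 1 : ℕ) : Polynomial K) * (b +
      Polynomial.C κ * (Polynomial.X - Polynomial.C e) + Polynomial.C (c * e)) := by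
    have hκ' := congrArg Polynomial.C hκ
    simp only [map_add, map_mul, Polynomial.derivative_mul, Polynomial.derivative_C,
      Polynomial.derivative_X_sub_C, map_natCast] at he hκ' ⊢
    push_cast at he hκ' ⊢
    linear_combination -(n + 1 : Polynomial K) * hq - derivative b * he
      - (Polynomial.X - Polynomial.C e) * hκ'
  obtain ⟨β, hβ⟩ := exists_eq_C_mul_pow_of_sub_mul_derivative e hode
  have hb' : b = Polynomial.C β * (Polynomial.X - Polynomial.C e) ^ (n + 1)
      - Polynomial.C κ * (Polynomial.X - Polynomial.C e) - Polynomial.C (c * e) := by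
    rw [← hβ]
    ring
  refine ⟨β, ?_, e, hb'⟩
  rintro rfl
  have hdeg : b.natDegree ≤ 1 := by
    rw [hb', map_zero, zero_mul]
    compute_degree
  omega

end Univariate

section BinaryForms

/-- The restriction of a binary form to the affine chart `y = 1`; left inverse to
`Polynomial.homogenize` up to the choice of a degree. -/
def dehomogenize {R : Type*} [CommRing R] : MvPolynomial (Fin 2) R →ₐ[R] Polynomial R :=
  aeval ![Polynomial.X, 1]

lemma eval_smul_of_isHomogeneous {σ R : Type*} [CommSemiring R] {P : MvPolynomial σ R}
    {n : ℕ} (hP : P.IsHomogeneous n) (c : R) (v : σ → R) :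
    eval (c • v) P = c ^ n * eval v P := by
  simp only [eval_eq, Finset.mul_sum, Pi.smul_apply, smul_eq_mul, mul_pow,
    Finset.prod_mul_distrib, Finset.prod_pow_eq_pow_sum]
  refine Finset.sum_congr rfl fun m hm ↦ ?_
  rw [← hP.degree_eq_sum_deg_support hm]
  ring

section CommRing

variable {R : Type*} [CommRing R] {P : MvPolynomial (Fin 2) R} {k n : ℕ}

lemma eval_dehomogenize (P : MvPolynomial (Fin 2) R) (t : R) :
    (dehomogenize P).eval t = eval ![t, 1] P := by
  rw [← Polynomial.coe_aeval_eq_eval, dehomogenize, comp_aeval_apply, ← coe_aeval_eq_eval]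
  refine congrArg (aeval · P) (funext fun i ↦ ?_)
  fin_cases i <;> simp

lemma derivative_dehomogenize (P : MvPolynomial (Fin 2) R) :
    (dehomogenize P).derivative = dehomogenize (pderiv 0 P) := by
  induction P using MvPolynomial.induction_on with
  | C a => simp [dehomogenize]
  | add p q hp hq => simp only [map_add, hp, hq]
  | mul_X p i hp =>
    rw [Derivation.leibniz, map_mul, Polynomial.derivative_mul, hp]
    fin_cases i <;> simp [dehomogenize, pderiv_X, mul_comm, add_comm]

lemma homogenize_dehomogenize (hP : P.IsHomogeneous n) : (dehomogenize P).homogenize n = P :=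
  Polynomial.homogenize_eq_of_isHomogeneous hP rfl

lemma eq_of_dehomogenize_eq {Q : MvPolynomial (Fin 2) R} (hP : P.IsHomogeneous n)
    (hQ : Q.IsHomogeneous n) (h : dehomogenize P = dehomogenize Q) : P = Q := by
  rw [← homogenize_dehomogenize hP, h, homogenize_dehomogenize hQ]

lemma natDegree_dehomogenize_le (hP : P.IsHomogeneous n) : (dehomogenize P).natDegree ≤ n := by
  simpa [dehomogenize] using aeval_natDegree_le P hP.totalDegree_le ![Polynomial.X, 1] (n := 1)
    (by simp [Fin.forall_fin_two, Polynomial.natDegree_X_le])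

lemma coeff_dehomogenize_eq_eval (hP : P.IsHomogeneous n) :
    (dehomogenize P).coeff n = eval ![1, 0] P := by
  conv_rhs => rw [← homogenize_dehomogenize hP, Polynomial.homogenize, map_sum]
  rw [Finset.sum_eq_single (n, 0)]
  · simp [eval_monomial]
  · rintro ⟨i, j⟩ hij hne
    have hj : j ≠ 0 := by
      rintro rfl
      simp_all
    simp [eval_monomial, hj]
  · simp

lemma exists_eq_X_pow_mul_of_natDegree_le (hP : P.IsHomogeneous (k + n))
    (h : (dehomogenize P).natDegree ≤ n) :
    ∃ Q : MvPolynomial (Fin 2) R, Q.IsHomogeneous n ∧ P = X 1 ^ k * Q := by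
  refine ⟨(dehomogenize P).homogenize n, Polynomial.isHomogeneous_homogenize _, ?_⟩
  rw [← Polynomial.homogenize_one, ← Polynomial.homogenize_mul _ _ (by simp) h, one_mul,
    homogenize_dehomogenize hP]

lemma exists_eq_C_mul_X_add_of_isHomogeneous_one (hP : P.IsHomogeneous 1) :
    ∃ α β, P = C α * X 0 + C β * X 1 := by
  obtain ⟨α, β, h⟩ := Polynomial.exists_eq_X_add_C_of_natDegree_le_one
    (natDegree_dehomogenize_le hP)
  refine ⟨α, β, ?_⟩
  rw [← homogenize_dehomogenize hP, h]
  simp [Polynomial.homogenize_add]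

end CommRing

variable {K : Type*} [Field K] {P : MvPolynomial (Fin 2) K} {k n : ℕ}

lemma exists_eq_pow_mul_of_pow_dvd_dehomogenize (hP : P.IsHomogeneous (k + n)) {r : K}
    (h : (Polynomial.X - Polynomial.C r) ^ k ∣ dehomogenize P) :
    ∃ Q : MvPolynomial (Fin 2) K, Q.IsHomogeneous n ∧ P = (X 0 - C r * X 1) ^ k * Q := by
  obtain ⟨q, hq⟩ := h
  have hmonic := (Polynomial.monic_X_sub_C r).pow k
  have hqdeg : q.natDegree ≤ n := by
    obtain rfl | hq0 := eq_or_ne q 0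
    · simp
    have := natDegree_dehomogenize_le hP
    rw [hq, hmonic.natDegree_mul' hq0, Polynomial.natDegree_pow, Polynomial.natDegree_X_sub_C,
      mul_one] at this
    omega
  refine ⟨q.homogenize n, Polynomial.isHomogeneous_homogenize _, ?_⟩
  rw [← homogenize_dehomogenize hP, hq, Polynomial.homogenize_mul _ _ (by simp) hqdeg]
  congr 1
  refine Polynomial.homogenize_eq_of_isHomogeneous ?_ (by simp)
  simpa using ((isHomogeneous_X K 0).sub ((isHomogeneous_X K 1).C_mul r)).pow k

lemma X_one_dvd_of_eval_eq_zero (hP : P.IsHomogeneous (n + 1)) (h : eval ![1, 0] P = 0) :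
    X 1 ∣ P := by
  have hcoeff : (dehomogenize P).coeff (n + 1) = 0 := by
    rw [coeff_dehomogenize_eq_eval hP, h]
  obtain ⟨Q, -, rfl⟩ := exists_eq_X_pow_mul_of_natDegree_le (k := 1) (by rwa [add_comm])
    (Polynomial.natDegree_le_pred (natDegree_dehomogenize_le hP) hcoeff)
  simp

lemma X_sub_C_mul_X_dvd_of_eval_eq_zero (hP : P.IsHomogeneous (n + 1)) {r : K}
    (h : eval ![r, 1] P = 0) : X 0 - C r * X 1 ∣ P := by
  rw [add_comm] at hP
  rw [← eval_dehomogenize] at h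
  obtain ⟨Q, -, rfl⟩ := exists_eq_pow_mul_of_pow_dvd_dehomogenize hP
    (by rwa [pow_one, Polynomial.dvd_iff_isRoot])
  simp

lemma linear_dvd_of_eval_eq_zero (hP : P.IsHomogeneous n) {v : Fin 2 → K} (hv : v ≠ 0)
    (h : eval v P = 0) : C (v 1) * X 0 - C (v 0) * X 1 ∣ P := by
  cases n with
  | zero =>
    rw [totalDegree_eq_zero_iff_eq_C.mp (Nat.le_zero.mp hP.totalDegree_le)] at h ⊢
    simp_all
  | succ n =>
    by_cases hv1 : v 1 = 0
    · have hv0 : v 0 ≠ 0 := fun hv0 ↦ hv (by ext i; fin_cases i <;> assumption)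
      have hv' : v 0 • ![1, 0] = v := by ext i; fin_cases i <;> simp [hv1]
      have hlin : C (v 1) * X 0 - C (v 0) * X 1 = C (-v 0) * (X 1 : MvPolynomial (Fin 2) K) := by
        simp [hv1]
      rw [hlin, ((neg_ne_zero.mpr hv0).isUnit.map C).mul_left_dvd]
      refine X_one_dvd_of_eval_eq_zero hP (mul_left_cancel₀ (pow_ne_zero (n + 1) hv0) ?_)
      rw [← eval_smul_of_isHomogeneous hP, hv', h, mul_zero]
    · have hv' : v 1 • ![v 0 / v 1, 1] = v := by
        ext i; fin_cases i <;> simp [mul_div_cancel₀ _ hv1]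
      have hlin : C (v 1) * X 0 - C (v 0) * X 1 =
          C (v 1) * (X 0 - C (v 0 / v 1) * X 1 : MvPolynomial (Fin 2) K) := by
        rw [mul_sub, ← mul_assoc, ← C_mul, mul_div_cancel₀ _ hv1]
      rw [hlin, ((Ne.isUnit hv1).map C).mul_left_dvd]
      refine X_sub_C_mul_X_dvd_of_eval_eq_zero hP
        (mul_left_cancel₀ (pow_ne_zero (n + 1) hv1) ?_)
      rw [← eval_smul_of_isHomogeneous hP, hv', h, mul_zero]

lemma exists_eval_eq_zero [IsAlgClosed K] (hP : P.IsHomogeneous n) (hn : n ≠ 0) :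
    ∃ v ≠ 0, eval v P = 0 := by
  by_cases h : (dehomogenize P).coeff n = 0
  · exact ⟨![1, 0], by simp, by rw [← coeff_dehomogenize_eq_eval hP, h]⟩
  · have hdeg : (dehomogenize P).natDegree ≠ 0 :=
      ((Nat.pos_of_ne_zero hn).trans_le (Polynomial.le_natDegree_of_ne_zero h)).ne'
    obtain ⟨t, ht⟩ := IsAlgClosed.exists_root (dehomogenize P)
      fun h0 ↦ hdeg (Polynomial.natDegree_eq_zero_iff_degree_le_zero.mpr h0.le)
    exact ⟨![t, 1], by simp, by rw [← eval_dehomogenize, ht]⟩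

end BinaryForms

section Pullback

open Matrix

lemma pderiv_bind₁ {σ τ R : Type*} [CommSemiring R] [Fintype σ] (f : σ → MvPolynomial τ R)
    (j : τ) (P : MvPolynomial σ R) :
    pderiv j (bind₁ f P) = ∑ i, bind₁ f (pderiv i P) * pderiv j (f i) := by
  classical
  induction P using MvPolynomial.induction_on with
  | C a => simp
  | add p q hp hq => simp only [map_add, hp, hq, add_mul, Finset.sum_add_distrib]
  | mul_X p i hp =>
    simp only [map_mul, bind₁_X_right, Derivation.leibniz, smul_eq_mul, hp, map_add, add_mul,
      Finset.sum_add_distrib, pderiv_X, Finset.mul_sum, Pi.single_apply, apply_ite (bind₁ f),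
      map_zero, mul_ite, ite_mul, mul_one, mul_zero, zero_mul, Finset.sum_ite_eq,
      Finset.mem_univ, if_true]
    simp only [mul_assoc]

lemma toMvPolynomial_fin_two {m R : Type*} [CommSemiring R] (M : Matrix m (Fin 2) R) (i : m) :
    M.toMvPolynomial i = C (M i 0) * X 0 + C (M i 1) * X 1 := by
  simp [Matrix.toMvPolynomial, C_mul_X_eq_monomial]

lemma eval_bind₁_toMvPolynomial {m n R : Type*} [CommSemiring R] [Fintype n]
    (M : Matrix m n R) (v : n → R) (P : MvPolynomial m R) :
    eval v (bind₁ M.toMvPolynomial P) = eval (M *ᵥ v) P := by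
  rw [← coe_aeval_eq_eval, AlgHom.coe_toRingHom, aeval_bind₁]
  refine congrArg (aeval · P) (funext fun i ↦ ?_)
  exact toMvPolynomial_eval_eq_apply M i v

lemma pderiv_bind₁_toMvPolynomial {R : Type*} [CommSemiring R] (M : Matrix (Fin 2) (Fin 2) R)
    (j : Fin 2) (P : MvPolynomial (Fin 2) R) :
    pderiv j (bind₁ M.toMvPolynomial P) =
      C (M 0 j) * bind₁ M.toMvPolynomial (pderiv 0 P) +
        C (M 1 j) * bind₁ M.toMvPolynomial (pderiv 1 P) := by
  rw [pderiv_bind₁, Fin.sum_univ_two]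
  fin_cases j <;> simp [toMvPolynomial_fin_two, pderiv_X, mul_comm]

variable {A B : P2} (M N : Matrix (Fin 2) (Fin 2) ℂ)

lemma comp2_eq_bind₁ (a₁ a₂ a₃ a₄ : ℂ) (P : P2) :
    comp2 a₁ a₂ a₃ a₄ P = bind₁ !![a₁, a₂; a₃, a₄].toMvPolynomial P := by
  refine congrArg (aeval · P) (funext fun i ↦ ?_)
  fin_cases i <;> simp [toMvPolynomial_fin_two]

/-- The coefficient of `dx` (for `j = 0`) or `dy` (for `j = 1`) in the pullback `φ*ω` of
`ω = A dx + B dy` by the linear map `φ` with matrix `M`. -/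
def pullback (A B : P2) (j : Fin 2) : P2 :=
  C (M 0 j) * bind₁ M.toMvPolynomial A + C (M 1 j) * bind₁ M.toMvPolynomial B

lemma linConj_iff_exists_pullback {A B A' B' : P2} :
    LinConj A B A' B' ↔ ∃ (M : Matrix (Fin 2) (Fin 2) ℂ) (lam : ℂ), M.det ≠ 0 ∧ lam ≠ 0 ∧
      pullback M A B 0 = C lam * A' ∧ pullback M A B 1 = C lam * B' := by
  constructor
  · rintro ⟨a₁, a₂, a₃, a₄, lam, hdet, hlam, hA, hB⟩
    refine ⟨!![a₁, a₂; a₃, a₄], lam, by rwa [det_fin_two_of], hlam, ?_, ?_⟩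
    · simpa [pullback, comp2_eq_bind₁] using hA
    · simpa [pullback, comp2_eq_bind₁] using hB
  · rintro ⟨M, lam, hdet, hlam, hA, hB⟩
    refine ⟨M 0 0, M 0 1, M 1 0, M 1 1, lam, by rwa [← det_fin_two], hlam, ?_, ?_⟩
    · rwa [comp2_eq_bind₁, comp2_eq_bind₁, ← eta_fin_two]
    · rwa [comp2_eq_bind₁, comp2_eq_bind₁, ← eta_fin_two]

lemma pullback_pullback (A B : P2) (j : Fin 2) :
    pullback N (pullback M A B 0) (pullback M A B 1) j = pullback (M * N) A B j := by
  have hcomp (P : P2) : bind₁ N.toMvPolynomial (bind₁ M.toMvPolynomial P) =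
      bind₁ (M * N).toMvPolynomial P := by
    rw [bind₁_bind₁, ← funext (toMvPolynomial_mul M N)]
  simp only [pullback, map_add, map_mul, algHom_C, algebraMap_eq, hcomp, mul_apply,
    Fin.sum_univ_two]
  ring

lemma linConj_of_linConj_pullback {A' B' : P2} (hM : M.det ≠ 0)
    (h : LinConj (pullback M A B 0) (pullback M A B 1) A' B') : LinConj A B A' B' := by
  obtain ⟨N, lam, hN, hlam, hA, hB⟩ := linConj_iff_exists_pullback.mp h
  rw [pullback_pullback] at hA hB
  exact linConj_iff_exists_pullback.mpr
    ⟨M * N, lam, by rw [det_mul]; exact mul_ne_zero hM hN, hlam, hA, hB⟩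

lemma Dpoly_pullback (A B : P2) :
    Dpoly (pullback M A B 0) (pullback M A B 1) =
      C (M.det ^ 2) * bind₁ M.toMvPolynomial (Dpoly A B) := by
  simp only [Dpoly, pullback, map_add, map_sub, map_mul, map_pow, pderiv_C_mul,
    pderiv_bind₁_toMvPolynomial, det_fin_two]
  ring

lemma Cpoly_pullback (A B : P2) :
    Cpoly (pullback M A B 0) (pullback M A B 1) = bind₁ M.toMvPolynomial (Cpoly A B) := by
  simp only [Cpoly, pullback, map_add, map_mul, bind₁_X_right, toMvPolynomial_fin_two]
  ring

end Pullback

section ConvexFoliation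

open Matrix
open Polynomial (wronskian)

lemma isHomogeneous_Dpoly {d : ℕ} {A B : P2} (hA : A.IsHomogeneous d) (hB : B.IsHomogeneous d) :
    (Dpoly A B).IsHomogeneous (d - 1 + (d - 1)) :=
  (hA.pderiv.mul hB.pderiv).sub (hA.pderiv.mul hB.pderiv)

lemma isHomogeneous_bind₁_toMvPolynomial {m n R : Type*} [CommSemiring R] [Fintype n] {d : ℕ}
    {P : MvPolynomial m R} (M : Matrix m n R) (hP : P.IsHomogeneous d) :
    (bind₁ M.toMvPolynomial P).IsHomogeneous d := by
  simpa using hP.aeval _ M.toMvPolynomial_isHomogeneous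

lemma isHomogeneous_pullback {d : ℕ} {A B : P2} (M : Matrix (Fin 2) (Fin 2) ℂ)
    (hA : A.IsHomogeneous d) (hB : B.IsHomogeneous d) (j : Fin 2) :
    (pullback M A B j).IsHomogeneous d :=
  ((isHomogeneous_bind₁_toMvPolynomial M hA).C_mul _).add
    ((isHomogeneous_bind₁_toMvPolynomial M hB).C_mul _)

/-- The conditions on `ω = A dx + B dy` of degree `d` in terms of the rational map
`(x : y) ↦ (B : -A)` of the projective line: `A` and `B` have no common zero, and every critical
point (a zero `v` of `D_ω`) is a fixed point (a zero of `C_ω`). -/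
structure IsConvexFoliation (d : ℕ) (A B : P2) : Prop where
  isHomogeneous_left : A.IsHomogeneous d
  isHomogeneous_right : B.IsHomogeneous d
  eval_right_ne_zero {v : Fin 2 → ℂ} (hv : v ≠ 0) (h : eval v A = 0) : eval v B ≠ 0
  eval_Cpoly_eq_zero {v : Fin 2 → ℂ} (hv : v ≠ 0) (h : eval v (Dpoly A B) = 0) :
    eval v (Cpoly A B) = 0

lemma IsConvexPair.isConvexFoliation {d : ℕ} {A B : P2} (hA : A.IsHomogeneous d)
    (hB : B.IsHomogeneous d) (hcop : NoCommonFactor A B) (hconv : IsConvexPair A B) :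
    IsConvexFoliation d A B where
  isHomogeneous_left := hA
  isHomogeneous_right := hB
  eval_right_ne_zero {v} hv hvA hvB := by
    have hunit := (hcop _ (linear_dvd_of_eval_eq_zero hA hv hvA)
      (linear_dvd_of_eval_eq_zero hB hv hvB)).map (eval v)
    simp [mul_comm] at hunit
  eval_Cpoly_eq_zero {v} hv h := by
    set l : P2 := C (v 1) * X 0 - C (v 0) * X 1 with hl
    have hl1 : l.IsHomogeneous 1 :=
      ((isHomogeneous_X ℂ 0).C_mul _).sub ((isHomogeneous_X ℂ 1).C_mul _)
    have hl0 : l ≠ 0 := by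
      intro h0
      have hv1 : v 1 = 0 := by simpa [hl] using congrArg (eval ![1, 0]) h0
      have hv0 : v 0 = 0 := by simpa [hl] using congrArg (eval ![0, 1]) h0
      exact hv (by ext i; fin_cases i <;> assumption)
    obtain ⟨Q, hQ⟩ := hconv l hl1 hl0 (linear_dvd_of_eval_eq_zero (isHomogeneous_Dpoly hA hB) hv h)
    simp [hQ, hl, mul_comm]

lemma exists_det_ne_zero_mulVec {K : Type*} [Field K] {v : Fin 2 → K} (hv : v ≠ 0) :
    ∃ M : Matrix (Fin 2) (Fin 2) K, M.det ≠ 0 ∧ M *ᵥ ![1, 0] = v := by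
  by_cases h0 : v 0 = 0
  · have h1 : v 1 ≠ 0 := fun h1 ↦ hv (by ext i; fin_cases i <;> assumption)
    refine ⟨!![v 0, 1; v 1, 0], by simpa using h1, ?_⟩
    ext i; fin_cases i <;> simp
  · refine ⟨!![v 0, 0; v 1, 1], by simpa using h0, ?_⟩
    ext i; fin_cases i <;> simp

namespace IsConvexFoliation

variable {A B : P2} {d : ℕ}

protected lemma pullback (H : IsConvexFoliation d A B) {M : Matrix (Fin 2) (Fin 2) ℂ}
    (hM : M.det ≠ 0) : IsConvexFoliation d (pullback M A B 0) (pullback M A B 1) := by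
  have hMv {v : Fin 2 → ℂ} (hv : v ≠ 0) : M *ᵥ v ≠ 0 := fun h ↦ hv (eq_zero_of_mulVec_eq_zero hM h)
  refine ⟨isHomogeneous_pullback M H.1 H.2 0, isHomogeneous_pullback M H.1 H.2 1,
    fun {v} hv h₀ h₁ ↦ ?_, fun {v} hv h ↦ ?_⟩
  · simp only [pullback, map_add, map_mul, eval_C, eval_bind₁_toMvPolynomial] at h₀ h₁
    have hA : eval (M *ᵥ v) A = 0 := mul_left_cancel₀ hM (by
      rw [det_fin_two]; linear_combination M 1 1 * h₀ - M 1 0 * h₁)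
    have hB : eval (M *ᵥ v) B = 0 := mul_left_cancel₀ hM (by
      rw [det_fin_two]; linear_combination M 0 0 * h₁ - M 0 1 * h₀)
    exact H.eval_right_ne_zero (hMv hv) hA hB
  · rw [Cpoly_pullback, eval_bind₁_toMvPolynomial]
    rw [Dpoly_pullback, map_mul, eval_C, eval_bind₁_toMvPolynomial] at h
    exact H.eval_Cpoly_eq_zero (hMv hv) ((mul_eq_zero.mp h).resolve_left (pow_ne_zero 2 hM))

lemma isCoprime_dehomogenize (H : IsConvexFoliation d A B) :
    IsCoprime (dehomogenize A) (dehomogenize B) := by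
  rw [Polynomial.isCoprime_iff_aeval_ne_zero_of_isAlgClosed ℂ ℂ]
  intro t
  rw [or_iff_not_imp_left, not_not]
  simpa [eval_dehomogenize] using H.eval_right_ne_zero (v := ![t, 1]) (by simp)

lemma dehomogenize_Dpoly (H : IsConvexFoliation d A B) :
    dehomogenize (Dpoly A B) =
      -((d : Polynomial ℂ) * wronskian (dehomogenize A) (dehomogenize B)) := by
  have euler {P : P2} (hP : P.IsHomogeneous d) :
      Polynomial.X * dehomogenize (pderiv 0 P) + dehomogenize (pderiv 1 P) =
        (d : Polynomial ℂ) * dehomogenize P := by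
    simpa [Fin.sum_univ_two, dehomogenize] using congrArg dehomogenize hP.sum_X_mul_pderiv
  have eulerA := euler H.isHomogeneous_left
  have eulerB := euler H.isHomogeneous_right
  simp only [Dpoly, map_sub, map_mul, wronskian, derivative_dehomogenize]
  linear_combination dehomogenize (pderiv 0 A) * eulerB - dehomogenize (pderiv 0 B) * eulerA

lemma dehomogenize_Cpoly (A B : P2) :
    dehomogenize (Cpoly A B) = Polynomial.X * dehomogenize A + dehomogenize B := by
  simp [Cpoly, dehomogenize]

lemma isRoot_of_isRoot_wronskian (H : IsConvexFoliation d A B) {r : ℂ}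
    (hr : (wronskian (dehomogenize A) (dehomogenize B)).IsRoot r) :
    (Polynomial.X * dehomogenize A + dehomogenize B).IsRoot r := by
  rw [← dehomogenize_Cpoly, Polynomial.IsRoot, eval_dehomogenize]
  refine H.eval_Cpoly_eq_zero (by simp) ?_
  rw [← eval_dehomogenize, H.dehomogenize_Dpoly]
  simp [hr.eq_zero]

lemma wronskian_dvd (H : IsConvexFoliation d A B)
    (hW : Squarefree (wronskian (dehomogenize A) (dehomogenize B))) :
    wronskian (dehomogenize A) (dehomogenize B) ∣
      Polynomial.X * dehomogenize A + dehomogenize B :=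
  dvd_of_squarefree_of_forall_isRoot hW fun _ ↦ H.isRoot_of_isRoot_wronskian

lemma exists_pullback_eval_Dpoly_eq_zero (H : IsConvexFoliation d A B) (hd : 2 ≤ d) :
    ∃ M : Matrix (Fin 2) (Fin 2) ℂ, M.det ≠ 0 ∧
      eval ![1, 0] (Dpoly (pullback M A B 0) (pullback M A B 1)) = 0 := by
  obtain ⟨v, hv, hDv⟩ := exists_eval_eq_zero
    (isHomogeneous_Dpoly H.isHomogeneous_left H.isHomogeneous_right) (by omega)
  obtain ⟨M, hM, rfl⟩ := exists_det_ne_zero_mulVec hv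
  exact ⟨M, hM, by rw [Dpoly_pullback, map_mul, eval_bind₁_toMvPolynomial, hDv, mul_zero]⟩

lemma natDegree_dehomogenize_of_eval_Dpoly_eq_zero (H : IsConvexFoliation (d + 2) A B)
    (h : eval ![1, 0] (Dpoly A B) = 0) :
    (dehomogenize A).natDegree ≤ d ∧ (dehomogenize B).natDegree = d + 2 := by
  have hdegA := natDegree_dehomogenize_le H.isHomogeneous_left
  have hdegB := natDegree_dehomogenize_le H.isHomogeneous_right
  have hfix : eval ![1, 0] A = 0 := by
    simpa [Cpoly] using H.eval_Cpoly_eq_zero (by simp) h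
  have hB : (dehomogenize B).coeff (d + 2) ≠ 0 := by
    rw [coeff_dehomogenize_eq_eval H.isHomogeneous_right]
    exact H.eval_right_ne_zero (by simp) hfix
  have hA : (dehomogenize A).coeff (d + 2) = 0 := by
    rw [coeff_dehomogenize_eq_eval H.isHomogeneous_left, hfix]
  have hdegA' : (dehomogenize A).natDegree ≤ d + 1 := Polynomial.natDegree_le_pred hdegA hA
  have hA' : (dehomogenize A).coeff (d + 1) = 0 := by
    have hD : (Dpoly A B).IsHomogeneous ((d + 1) + (d + 1)) :=
      isHomogeneous_Dpoly H.isHomogeneous_left H.isHomogeneous_right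
    have hd : (d : ℂ) + 2 ≠ 0 := by norm_cast
    rw [← coeff_dehomogenize_eq_eval hD, H.dehomogenize_Dpoly, Polynomial.coeff_neg,
      Polynomial.coeff_natCast_mul, coeff_wronskian hdegA' hdegB] at h
    simpa [hB, hd] using h
  exact ⟨Polynomial.natDegree_le_pred hdegA' hA',
    Polynomial.natDegree_eq_of_le_of_coeff_ne_zero hdegB hB⟩

lemma exists_sub_pow_three_mul_of_not_squarefree (H : IsConvexFoliation (3 + d) A B)
    (hW : ¬ Squarefree (wronskian (dehomogenize A) (dehomogenize B))) :
    ∃ (r : ℂ) (Q : P2), Q.IsHomogeneous d ∧ (C r * A + B : P2) = (X 0 - C r * X 1) ^ 3 * Q := by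
  obtain ⟨r, hr⟩ := exists_X_sub_C_sq_dvd_of_not_squarefree hW
  have hfix : (Polynomial.C r * dehomogenize A + dehomogenize B).IsRoot r := by
    simpa using H.isRoot_of_isRoot_wronskian
      (Polynomial.dvd_iff_isRoot.mp ((dvd_pow_self _ two_ne_zero).trans hr))
  have hA : ¬ (dehomogenize A).IsRoot r := by
    intro h
    have hB : (dehomogenize B).IsRoot r := by simpa [h.eq_zero] using hfix
    rw [Polynomial.IsRoot, eval_dehomogenize] at h hB
    exact H.eval_right_ne_zero (by simp) h hB
  have hdvd := X_sub_C_pow_succ_dvd_of_dvd_wronskian hA hfix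
    (by rwa [wronskian_self_add_C_mul])
  obtain ⟨Q, hQ⟩ := exists_eq_pow_mul_of_pow_dvd_dehomogenize (P := (C r * A + B : P2))
    ((H.isHomogeneous_left.C_mul r).add H.isHomogeneous_right) (by simpa [dehomogenize] using hdvd)
  exact ⟨r, Q, hQ⟩

lemma exists_dehomogenize_left_eq_C (H : IsConvexFoliation (d + 2) A B)
    (hD : eval ![1, 0] (Dpoly A B) = 0)
    (hW : Squarefree (wronskian (dehomogenize A) (dehomogenize B))) :
    ∃ c ≠ 0, dehomogenize A = Polynomial.C c := by
  obtain ⟨hdegA, hdegB⟩ := H.natDegree_dehomogenize_of_eval_Dpoly_eq_zero hD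
  obtain ⟨c, hc⟩ := Polynomial.natDegree_eq_zero.mp
    (natDegree_eq_zero_of_wronskian_dvd H.isCoprime_dehomogenize (by omega) (H.wronskian_dvd hW))
  refine ⟨c, ?_, hc.symm⟩
  rintro rfl
  exact hW.ne_zero (by simp [← hc])

lemma exists_eq_of_squarefree (H : IsConvexFoliation (d + 2) A B)
    (hD : eval ![1, 0] (Dpoly A B) = 0)
    (hW : Squarefree (wronskian (dehomogenize A) (dehomogenize B))) :
    ∃ β c e : ℂ, β ≠ 0 ∧ c ≠ 0 ∧ A = C c * X 1 ^ (d + 2) ∧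
      B = C β * (X 0 - C e * X 1) ^ (d + 2)
        - C ((d + 2 : ℕ) / (d + 1 : ℕ) * c) * ((X 0 - C e * X 1) * X 1 ^ (d + 1))
        - C (c * e) * X 1 ^ (d + 2) := by
  obtain ⟨-, hdegB⟩ := H.natDegree_dehomogenize_of_eval_Dpoly_eq_zero hD
  obtain ⟨c, hc0, hc⟩ := H.exists_dehomogenize_left_eq_C hD hW
  have hdvd : Polynomial.derivative (dehomogenize B) ∣
      Polynomial.C c * Polynomial.X + dehomogenize B := by
    have hWdvd := H.wronskian_dvd hW
    rw [hc, mul_comm Polynomial.X] at hWdvd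
    exact (Dvd.intro_left (Polynomial.C c) (by simp [wronskian])).trans hWdvd
  obtain ⟨β, hβ, e, hb⟩ := exists_eq_of_derivative_dvd d.succ_ne_zero hdegB hdvd
  refine ⟨β, c, e, hβ, hc0, ?_, ?_⟩
  · refine eq_of_dehomogenize_eq H.isHomogeneous_left ((isHomogeneous_X_pow 1 _).C_mul c) ?_
    rw [hc]
    simp [dehomogenize]
  · have hL : (X 0 - C e * X 1 : P2).IsHomogeneous 1 :=
      (isHomogeneous_X ℂ 0).sub ((isHomogeneous_X ℂ 1).C_mul e)
    have hL' : ((X 0 - C e * X 1) ^ (d + 2) : P2).IsHomogeneous (d + 2) := by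
      simpa using hL.pow (d + 2)
    have hLX : ((X 0 - C e * X 1) * X 1 ^ (d + 1) : P2).IsHomogeneous (d + 2) := by
      convert hL.mul (isHomogeneous_X_pow 1 (d + 1)) using 1
      omega
    refine eq_of_dehomogenize_eq H.isHomogeneous_right (((hL'.C_mul β).sub (hLX.C_mul _)).sub
      ((isHomogeneous_X_pow 1 _).C_mul _)) ?_
    rw [hb]
    simp [dehomogenize, add_assoc, one_add_one_eq_two]

end IsConvexFoliation

end ConvexFoliation

section Classification

open Matrix
open Polynomial (wronskian)

/-- `ω = A dx + B dy` is linearly conjugate to one of the models `ω₁, …, ω₅`. -/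
def ConjugateToModel (A B : P2) : Prop :=
  LinConj A B A1 B1 ∨ LinConj A B A2 B2 ∨ LinConj A B A3 B3 ∨ LinConj A B A4 B4 ∨
    LinConj A B A5 B5

lemma ConjugateToModel.of_pullback {A B : P2} {M : Matrix (Fin 2) (Fin 2) ℂ} (hM : M.det ≠ 0)
    (h : ConjugateToModel (pullback M A B 0) (pullback M A B 1)) : ConjugateToModel A B := by
  have hconj {A' B' : P2} (h : LinConj (pullback M A B 0) (pullback M A B 1) A' B') :
      LinConj A B A' B' := linConj_of_linConj_pullback M hM h
  exact h.imp hconj (.imp hconj (.imp hconj (.imp hconj hconj)))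

/-- The coefficient `y³(αx + βy)` of `dx` in a 1-form for which `(1 : 0)` is a fixed critical
point of multiplicity at least two. -/
def leftForm (α β : ℂ) : P2 := X 1 ^ 3 * (C α * X 0 + C β * X 1)

/-- The coefficient `x³(γx + δy)` of `dy` in a 1-form for which `(0 : 1)` is a fixed critical
point of multiplicity at least two. -/
def rightForm (γ δ : ℂ) : P2 := X 0 ^ 3 * (C γ * X 0 + C δ * X 1)

lemma linConj_one {β k : ℂ} (hβ : β ≠ 0) (hk : k ≠ 0) :
    LinConj (leftForm 0 β) (rightForm (-(k ^ 3 * β)) 0) A1 B1 := by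
  refine ⟨1, 0, 0, k, β * k ^ 4, by simpa, by simp [hβ, hk], ?_, ?_⟩ <;>
  · simp only [comp2, leftForm, rightForm, A1, B1, map_mul, map_add, map_pow, map_neg, map_zero,
      map_one, aeval_X, algHom_C, algebraMap_eq, cons_val_zero, cons_val_one, cons_val_fin_one]
    ring

lemma linConj_two {γ r : ℂ} (hγ : γ ≠ 0) (hr : r ≠ 0) :
    LinConj (leftForm (2 * γ * r ^ 2) (-(γ * r ^ 3))) (rightForm γ (-(2 * γ * r))) A2 B2 := by
  refine ⟨r, 0, 0, 1, γ * r ^ 4, by simpa, by simp [hγ, hr], ?_, ?_⟩ <;>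
  · simp only [comp2, leftForm, rightForm, A2, B2, map_mul, map_add, map_pow, map_neg, map_zero,
      map_one, map_ofNat, aeval_X, algHom_C, algebraMap_eq, cons_val_zero, cons_val_one,
      cons_val_fin_one]
    ring

lemma linConj_three {κ r : ℂ} (hκ : κ ≠ 0) (hr : r ≠ 0) :
    LinConj (leftForm 0 (κ * r ^ 3)) (rightForm (3 * κ) (-(4 * κ * r))) A3 B3 := by
  refine ⟨r, 0, 1, 1, κ * r ^ 4, by simpa, by simp [hκ, hr], ?_, ?_⟩ <;>
  · simp only [comp2, leftForm, rightForm, A3, B3, map_mul, map_add, map_pow, map_neg, map_zero,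
      map_one, map_ofNat, aeval_X, algHom_C, algebraMap_eq, cons_val_zero, cons_val_one,
      cons_val_fin_one]
    ring

lemma linConj_four {β t : ℂ} (hβ : β ≠ 0) (ht : t ≠ 0) :
    LinConj (leftForm (4 * β * t) β) (rightForm (β * t ^ 3) (4 * β * t ^ 2)) A4 B4 := by
  refine ⟨1, 0, 0, t, β * t ^ 4, by simpa, by simp [hβ, ht], ?_, ?_⟩ <;>
  · simp only [comp2, leftForm, rightForm, A4, B4, map_mul, map_add, map_pow, map_zero, map_one,
      map_ofNat, aeval_X, algHom_C, algebraMap_eq, cons_val_zero, cons_val_one, cons_val_fin_one]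
    ring

lemma linConj_five {β k : ℂ} (e : ℂ) (hβ : β ≠ 0) (hk : k ≠ 0) :
    LinConj (C (3 * β * k ^ 3) * X 1 ^ 4)
      (C β * ((X 0 - C e * X 1) ^ 4 - C (4 * k ^ 3) * (X 0 - C e * X 1) * X 1 ^ 3
        - C (3 * k ^ 3 * e) * X 1 ^ 4)) A5 B5 := by
  refine ⟨k + e, k, 1, 0, β * k ^ 4, by simpa, by simp [hβ, hk], ?_, ?_⟩ <;>
  · simp only [comp2, A5, B5, map_mul, map_add, map_sub, map_pow, map_zero, map_one, map_ofNat,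
      aeval_X, algHom_C, algebraMap_eq, cons_val_zero, cons_val_one, cons_val_fin_one]
    ring

lemma pullback_swap_zero (α β γ δ : ℂ) :
    pullback !![0, 1; 1, 0] (leftForm α β) (rightForm γ δ) 0 = leftForm δ γ := by
  simp [pullback, leftForm, rightForm, toMvPolynomial_fin_two, add_comm]

lemma pullback_swap_one (α β γ δ : ℂ) :
    pullback !![0, 1; 1, 0] (leftForm α β) (rightForm γ δ) 1 = rightForm β α := by
  simp [pullback, leftForm, rightForm, toMvPolynomial_fin_two, add_comm]

namespace IsConvexFoliation

variable {α β γ δ : ℂ}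

lemma right_ne_zero (H : IsConvexFoliation 4 (leftForm α β) (rightForm γ δ)) : β ≠ 0 := by
  rintro rfl
  exact H.eval_right_ne_zero (v := ![0, 1]) (by simp) (by simp [leftForm]) (by simp [rightForm])

lemma left_ne_zero (H : IsConvexFoliation 4 (leftForm α β) (rightForm γ δ)) : γ ≠ 0 := by
  rintro rfl
  exact H.eval_right_ne_zero (v := ![1, 0]) (by simp) (by simp [leftForm]) (by simp [rightForm])

lemma mul_add_ne_zero (H : IsConvexFoliation 4 (leftForm α β) (rightForm γ δ)) {r : ℂ}
    (h : α * r + β = 0) : γ * r + δ ≠ 0 := fun h' ↦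
  H.eval_right_ne_zero (v := ![r, 1]) (by simp) (by simp [leftForm, h]) (by simp [rightForm, h'])

lemma fixed_of_critical (H : IsConvexFoliation 4 (leftForm α β) (rightForm γ δ)) {r : ℂ}
    (hr : r ≠ 0)
    (h : 3 * (α * γ) * r ^ 2 + (2 * (α * δ) + 4 * (β * γ)) * r + 3 * (β * δ) = 0) :
    γ * r ^ 3 + δ * r ^ 2 + α * r + β = 0 := by
  have hD : eval ![r, 1] (Dpoly (leftForm α β) (rightForm γ δ)) = -4 * r ^ 2 *
      (3 * (α * γ) * r ^ 2 + (2 * (α * δ) + 4 * (β * γ)) * r + 3 * (β * δ)) := by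
    simp only [Dpoly, leftForm, rightForm, Derivation.leibniz, Derivation.leibniz_pow, pderiv_X,
      Pi.single_apply, derivation_C, smul_eq_mul, nsmul_eq_mul, Nat.cast_ofNat, Nat.add_one_sub_one,
      map_add, map_sub, map_mul, map_pow, map_ofNat, eval_X, eval_C, cons_val_zero, cons_val_one,
      cons_val_fin_one, zero_ne_one, one_ne_zero, if_true, if_false, map_one, map_zero]
    ring
  have hfix := H.eval_Cpoly_eq_zero (v := ![r, 1]) (by simp) (by rw [hD, h, mul_zero])
  simp only [Cpoly, leftForm, rightForm, map_add, map_mul, map_pow, eval_X, eval_C,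
    cons_val_zero, cons_val_one, cons_val_fin_one] at hfix
  exact mul_left_cancel₀ hr (by linear_combination hfix)

lemma linConj_three_of_eq_zero (H : IsConvexFoliation 4 (leftForm 0 β) (rightForm γ δ))
    (hδ : δ ≠ 0) : LinConj (leftForm 0 β) (rightForm γ δ) A3 B3 := by
  obtain ⟨κ, rfl⟩ : ∃ κ, γ = 3 * κ := ⟨γ / 3, by ring⟩
  have hκ : κ ≠ 0 := right_ne_zero_of_mul H.left_ne_zero
  obtain ⟨r, rfl⟩ : ∃ r, δ = -(4 * κ * r) := ⟨-δ / (4 * κ), by field_simp⟩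
  have hr : r ≠ 0 := right_ne_zero_of_mul (neg_ne_zero.mp hδ)
  obtain rfl : β = κ * r ^ 3 := by
    linear_combination H.fixed_of_critical hr (by ring)
  exact linConj_three hκ hr

lemma linConj_one_of_eq_zero (H : IsConvexFoliation 4 (leftForm 0 β) (rightForm γ 0)) :
    LinConj (leftForm 0 β) (rightForm γ 0) A1 B1 := by
  have hβ := H.right_ne_zero
  obtain ⟨k, hk⟩ := IsAlgClosed.exists_pow_nat_eq (-γ / β) three_pos
  obtain rfl : γ = -(k ^ 3 * β) := by rw [hk]; field_simp
  exact linConj_one hβ (by rintro rfl; simpa using H.left_ne_zero)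

lemma linConj_two_of_double_root (H : IsConvexFoliation 4 (leftForm α β) (rightForm γ δ))
    (hα : α ≠ 0) (hδ : δ ≠ 0) {r : ℂ} (hsum : α * δ + 2 * (β * γ) = -(3 * (α * γ) * r))
    (hprod : β * δ = α * γ * r ^ 2) :
    LinConj (leftForm α β) (rightForm γ δ) A2 B2 := by
  have hγ := H.left_ne_zero
  have hr : r ≠ 0 := by
    rintro rfl
    exact mul_ne_zero H.right_ne_zero hδ (by simpa using hprod)
  have hfactor : (γ * r + δ) * (2 * γ * r + δ) = 0 := mul_left_cancel₀ hα (by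
    linear_combination δ * hsum - 2 * γ * hprod)
  obtain hδ' | hδ' := mul_eq_zero.mp hfactor
  · refine absurd hδ' (H.mul_add_ne_zero (r := r) (mul_left_cancel₀ (mul_ne_zero hγ hr) ?_))
    linear_combination β * hδ' - hprod
  · obtain rfl : δ = -(2 * γ * r) := by linear_combination hδ'
    have hβ : 2 * β = -(α * r) := mul_left_cancel₀ (mul_ne_zero hγ hr) (by
      linear_combination -hprod)
    have hfix := H.fixed_of_critical hr (by linear_combination 2 * r * hsum + 3 * hprod)
    obtain rfl : α = 2 * γ * r ^ 2 := mul_left_cancel₀ hr (by linear_combination 2 * hfix - hβ)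
    obtain rfl : β = -(γ * r ^ 3) := by linear_combination hβ / 2
    exact linConj_two hγ hr

lemma linConj_four_of_distinct_roots (H : IsConvexFoliation 4 (leftForm α β) (rightForm γ δ))
    (hα : α ≠ 0) (hδ : δ ≠ 0) {r s : ℂ} (hrs : r ≠ s)
    (hsum : 2 * (α * δ) + 4 * (β * γ) = -(3 * (α * γ) * (r + s)))
    (hprod : β * δ = α * γ * (r * s)) :
    LinConj (leftForm α β) (rightForm γ δ) A4 B4 := by
  have hβ := H.right_ne_zero
  have hγ := H.left_ne_zero
  have hrs0 : r * s ≠ 0 := right_ne_zero_of_mul (hprod ▸ mul_ne_zero hβ hδ)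
  have hfix_r := H.fixed_of_critical (left_ne_zero_of_mul hrs0)
    (by linear_combination r * hsum + 3 * hprod)
  have hfix_s := H.fixed_of_critical (right_ne_zero_of_mul hrs0)
    (by linear_combination s * hsum + 3 * hprod)
  -- The remainder of the fixed-point cubic modulo the critical quadratic vanishes.
  have hlin : γ * ((r + s) ^ 2 - r * s) + δ * (r + s) + α = 0 :=
    mul_left_cancel₀ (sub_ne_zero.mpr hrs) (by linear_combination hfix_r - hfix_s)
  have hconst : β = r * s * (γ * (r + s) + δ) := by
    linear_combination hfix_r - r * hlin
  have hδ_sum : δ * (γ * (r + s) + δ) = α * γ := mul_left_cancel₀ hβ (by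
    linear_combination (γ * (r + s) + δ) * hprod - α * γ * hconst)
  have hαδ : α * δ ^ 2 = 3 * α ^ 2 * γ + 4 * β * γ * δ := by
    linear_combination 3 * α * hδ_sum - δ * hsum
  have hcube : α ^ 3 * γ = β * δ ^ 3 := by
    linear_combination -α ^ 2 * hδ_sum + α * δ * (δ * hlin - (r + s) * hδ_sum) - δ ^ 2 * hprod
  have hfactor : (δ ^ 2 + α * γ) * (δ ^ 2 - 4 * (α * γ)) = 0 := mul_left_cancel₀ hα (by
    linear_combination δ ^ 2 * hαδ - 4 * γ * hcube)
  obtain h | h := mul_eq_zero.mp hfactor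
  · have hβγ : β * γ = α * δ := mul_left_cancel₀ (mul_ne_zero hα hδ) (by
      linear_combination hcube + (β * δ - α ^ 2) * h)
    exact absurd (by field_simp; ring) (H.mul_add_ne_zero (r := -δ / γ) (by
      field_simp; linear_combination hβγ))
  · obtain ⟨t, rfl⟩ : ∃ t, δ = α * t := ⟨δ / α, by field_simp⟩
    have ht : t ≠ 0 := right_ne_zero_of_mul hδ
    have hγ' : 4 * γ = α * t ^ 2 := mul_left_cancel₀ hα (by linear_combination -h)
    obtain rfl : α = 4 * β * t := mul_left_cancel₀ (by positivity : α ^ 3 * t ^ 2 ≠ 0) (by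
      linear_combination 4 * hcube - α ^ 3 * hγ')
    obtain rfl : γ = β * t ^ 3 := by linear_combination hγ' / 4
    convert linConj_four hβ ht using 2
    ring

lemma conjugateToModel_of_ne_zero (H : IsConvexFoliation 4 (leftForm α β) (rightForm γ δ))
    (hα : α ≠ 0) (hδ : δ ≠ 0) : ConjugateToModel (leftForm α β) (rightForm γ δ) := by
  have hαγ : 3 * (α * γ) ≠ 0 := mul_ne_zero three_ne_zero (mul_ne_zero hα H.left_ne_zero)
  obtain ⟨r, s, hsum, hprod⟩ :=
    exists_vieta_quadratic hαγ (2 * (α * δ) + 4 * (β * γ)) (3 * (β * δ))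
  have hprod' : β * δ = α * γ * (r * s) := by linear_combination hprod / 3
  obtain rfl | hrs := eq_or_ne r s
  · exact .inr (.inl (H.linConj_two_of_double_root hα hδ (r := r)
      (by linear_combination hsum / 2) (by rw [hprod', sq])))
  · exact .inr (.inr (.inr (.inl (H.linConj_four_of_distinct_roots hα hδ hrs hsum hprod'))))

lemma conjugateToModel_of_left_eq_zero (H : IsConvexFoliation 4 (leftForm 0 β) (rightForm γ δ)) :
    ConjugateToModel (leftForm 0 β) (rightForm γ δ) := by
  obtain rfl | hδ := eq_or_ne δ 0
  · exact .inl H.linConj_one_of_eq_zero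
  · exact .inr (.inr (.inl (H.linConj_three_of_eq_zero hδ)))

lemma conjugateToModel_leftForm_rightForm
    (H : IsConvexFoliation 4 (leftForm α β) (rightForm γ δ)) :
    ConjugateToModel (leftForm α β) (rightForm γ δ) := by
  obtain rfl | hα := eq_or_ne α 0
  · exact H.conjugateToModel_of_left_eq_zero
  obtain rfl | hδ := eq_or_ne δ 0
  · have hswap : (!![0, 1; 1, 0] : Matrix (Fin 2) (Fin 2) ℂ).det ≠ 0 := by simp
    refine .of_pullback hswap ?_
    have H' := H.pullback hswap
    rw [pullback_swap_zero, pullback_swap_one] at H' ⊢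
    exact H'.conjugateToModel_of_left_eq_zero
  · exact H.conjugateToModel_of_ne_zero hα hδ

lemma linConj_five_of_squarefree {A B : P2} (H : IsConvexFoliation 4 A B)
    (hD : eval ![1, 0] (Dpoly A B) = 0)
    (hW : Squarefree (wronskian (dehomogenize A) (dehomogenize B))) : LinConj A B A5 B5 := by
  obtain ⟨β, c, e, hβ, hc, rfl, rfl⟩ := H.exists_eq_of_squarefree hD hW
  obtain ⟨k, hk⟩ := IsAlgClosed.exists_pow_nat_eq (c / (3 * β)) three_pos
  obtain rfl : c = 3 * β * k ^ 3 := by rw [hk]; field_simp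
  have hcoeff : ((2 + 2 : ℕ) : ℂ) / (2 + 1 : ℕ) * (3 * β * k ^ 3) = β * (4 * k ^ 3) := by
    push_cast
    ring
  convert linConj_five e hβ (k := k) (by rintro rfl; simp at hc) using 1
  rw [hcoeff]
  simp only [map_mul]
  ring

lemma exists_pullback_eq_leftForm {A B : P2} (H : IsConvexFoliation 4 A B)
    (hW : ¬ Squarefree (wronskian (dehomogenize A) (dehomogenize B))) :
    ∃ M : Matrix (Fin 2) (Fin 2) ℂ, M.det ≠ 0 ∧ ∃ α β, pullback M A B 0 = leftForm α β := by
  obtain ⟨r, Q, hQ, h⟩ := H.exists_sub_pow_three_mul_of_not_squarefree (d := 1) hW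
  set M : Matrix (Fin 2) (Fin 2) ℂ := !![r, 1; 1, 0] with hM
  obtain ⟨α, β, hαβ⟩ :=
    exists_eq_C_mul_X_add_of_isHomogeneous_one (isHomogeneous_bind₁_toMvPolynomial M hQ)
  refine ⟨M, by simp [hM], α, β, ?_⟩
  have hcomp := congrArg (bind₁ M.toMvPolynomial) h
  rw [map_mul, hαβ] at hcomp
  simpa [pullback, leftForm, toMvPolynomial_fin_two, hM] using hcomp

lemma exists_pullback_eq_leftForm_rightForm {B : P2} (H : IsConvexFoliation 4 (leftForm α β) B)
    (hW : ¬ Squarefree (wronskian (dehomogenize (leftForm α β)) (dehomogenize B))) :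
    ∃ M : Matrix (Fin 2) (Fin 2) ℂ, M.det ≠ 0 ∧ ∃ α' β' γ' δ',
      pullback M (leftForm α β) B 0 = leftForm α' β' ∧
      pullback M (leftForm α β) B 1 = rightForm γ' δ' := by
  obtain ⟨r, Q, hQ, h⟩ := H.exists_sub_pow_three_mul_of_not_squarefree (d := 1) hW
  set M : Matrix (Fin 2) (Fin 2) ℂ := !![1, r; 0, 1] with hM
  obtain ⟨γ', δ', hγδ⟩ :=
    exists_eq_C_mul_X_add_of_isHomogeneous_one (isHomogeneous_bind₁_toMvPolynomial M hQ)
  refine ⟨M, by simp [hM], α, α * r + β, γ', δ', ?_, ?_⟩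
  · simp only [pullback, leftForm, map_add, map_mul, map_pow, bind₁_X_right, algHom_C,
      algebraMap_eq, toMvPolynomial_fin_two, hM, of_apply, cons_val_zero, cons_val_one,
      cons_val_fin_one, map_zero, map_one]
    ring
  · have hcomp := congrArg (bind₁ M.toMvPolynomial) h
    rw [map_mul, hγδ] at hcomp
    simpa [pullback, rightForm, toMvPolynomial_fin_two, hM] using hcomp

lemma conjugateToModel_leftForm {B : P2} (H : IsConvexFoliation 4 (leftForm α β) B) :
    ConjugateToModel (leftForm α β) B := by
  by_cases hW : Squarefree (wronskian (dehomogenize (leftForm α β)) (dehomogenize B))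
  · have hD : eval ![1, 0] (Dpoly (leftForm α β) B) = 0 := by simp [Dpoly, leftForm, pderiv_X]
    exact .inr (.inr (.inr (.inr (H.linConj_five_of_squarefree hD hW))))
  obtain ⟨M, hM, α', β', γ', δ', hleft, hright⟩ := H.exists_pullback_eq_leftForm_rightForm hW
  have H' := H.pullback hM
  refine .of_pullback hM ?_
  rw [hleft, hright] at H' ⊢
  exact H'.conjugateToModel_leftForm_rightForm

lemma conjugateToModel_of_eval_Dpoly_eq_zero {A B : P2} (H : IsConvexFoliation 4 A B)
    (hD : eval ![1, 0] (Dpoly A B) = 0) : ConjugateToModel A B := by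
  by_cases hW : Squarefree (wronskian (dehomogenize A) (dehomogenize B))
  · exact .inr (.inr (.inr (.inr (H.linConj_five_of_squarefree hD hW))))
  obtain ⟨M, hM, α, β, hleft⟩ := H.exists_pullback_eq_leftForm hW
  have H' := H.pullback hM
  refine .of_pullback hM ?_
  rw [hleft] at H' ⊢
  exact H'.conjugateToModel_leftForm

end IsConvexFoliation

end Classification

/-- **Theorem A.** Every convex homogeneous foliation of degree four on `ℙ²(ℂ)` is linearly
conjugate to one of the five foliations `ω₁, …, ω₅`. -/
theorem convex_homogeneous_degree_four_classification
    (A B : P2) (hA : A.IsHomogeneous 4) (hB : B.IsHomogeneous 4)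
    (hcop : NoCommonFactor A B) (hconv : IsConvexPair A B) :
    LinConj A B A1 B1 ∨ LinConj A B A2 B2 ∨ LinConj A B A3 B3 ∨
      LinConj A B A4 B4 ∨ LinConj A B A5 B5 := by
  have H := IsConvexPair.isConvexFoliation hA hB hcop hconv
  obtain ⟨M, hM, hD⟩ := H.exists_pullback_eval_Dpoly_eq_zero (by norm_num)
  exact ConjugateToModel.of_pullback hM
    ((H.pullback hM).conjugateToModel_of_eval_Dpoly_eq_zero hD)
end
end

section
/- Set ω₁ = y⁴dx − x⁴dy, ω₂ = y³(2x−y)dx + x³(x−2y)dy, ω₃ = y²(6x²+4xy+y²)dx − x³(x+4y)dy, ω₄ = y³(4x+y)dx + x³(x+4y)dy, ω₅ = y²(6x²+4xy+y²)dx + 3x⁴dy. For all i ≠ j in {1,…,5}, ω_i and ω_j are not linearly conjugate: there exist no φ ∈ GL₂(ℂ) and λ ∈ ℂ∖{0} with φ*ω_i = λ ω_j. -/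
open MvPolynomial

noncomputable section

/-- The five convex homogeneous 1-forms of degree four, as pairs of coefficients `(A, B)`. -/
def omegas : Fin 5 → P2 × P2 := ![(A1, B1), (A2, B2), (A3, B3), (A4, B4), (A5, B5)]

/-!
If `φ*ω = λω'`, then `det(φ)² · (D_ω ∘ φ) = λ² · D_ω'`, by the chain rule. A linear substitution is
an automorphism of `ℂ[x, y]`, so the multiset of multiplicities of the irreducible factors of the
inflection polynomial is the same for `ω` and `ω'`. For `ω₁, …, ω₅` these multisets are
`{3, 3}`, `{2, 2, 2}`, `{2, 1, 3}`, `{2, 2, 1, 1}` and `{3, 1, 1, 1}`, which are distinct.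
-/

section MultiplicityType

open UniqueFactorizationMonoid

/-- The multiset of exponents in the factorization of `p` into pairwise non-associated
irreducibles; it is empty for `p = 0`. -/
def multiplicityType {R : Type*} [CommMonoidWithZero R] [UniqueFactorizationMonoid R] (p : R) :
    Multiset ℕ :=
  open scoped Classical in
  let s := (factors p).map Associates.mk
  s.dedup.map s.count

variable {R S : Type*} [CommMonoidWithZero R] [UniqueFactorizationMonoid R]
  [CommMonoidWithZero S] [UniqueFactorizationMonoid S]

theorem map_mk_factors_eq_of_associated_prod {p : R} {s : Multiset R}
    (hs : ∀ q ∈ s, Irreducible q) (hp : p ≠ 0) (h : Associated p s.prod) :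
    (factors p).map Associates.mk = s.map Associates.mk := by
  have hrel : Multiset.Rel Associated (factors p) s :=
    factors_unique irreducible_of_factor hs ((factors_prod hp).trans h)
  simpa only [← Multiset.rel_eq, Multiset.rel_map, Associates.mk_eq_mk_iff_associated] using hrel

theorem multiplicityType_eq_of_associated {p q : R} (h : Associated p q) :
    multiplicityType p = multiplicityType q := by
  have hfactors : (factors p).map Associates.mk = (factors q).map Associates.mk := by
    simpa only [← Multiset.rel_eq, Multiset.rel_map, Associates.mk_eq_mk_iff_associated] using
      factors_rel_of_associated h
  simp only [multiplicityType, hfactors]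

theorem multiplicityType_map (e : R ≃* S) (p : R) :
    multiplicityType (e p) = multiplicityType p := by
  classical
  obtain rfl | hp := eq_or_ne p 0
  · simp [multiplicityType]
  let eAssoc : Associates R ≃ Associates S :=
    Quotient.congr e.toEquiv fun a b =>
      ⟨fun h => h.map e, fun h => show Associated a b by simpa using h.map e.symm⟩
  have hfactors : (factors (e p)).map Associates.mk =
      ((factors p).map Associates.mk).map eAssoc := by
    have hprod : Associated (e p) ((factors p).map e).prod := by
      rw [← map_multiset_prod]
      exact (factors_prod hp).symm.map e
    rw [map_mk_factors_eq_of_associated_prod _ ((map_ne_zero_iff e e.injective).2 hp) hprod,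
      Multiset.map_map, Multiset.map_map]
    · rfl
    · simpa [MulEquiv.irreducible_iff] using fun q hq => irreducible_of_factor (a := p) q hq
  simp only [multiplicityType, hfactors, Multiset.dedup_map_of_injective eAssoc.injective]
  simp only [Multiset.map_map _ eAssoc, Function.comp_def,
    Multiset.count_map_eq_count' _ _ eAssoc.injective]

theorem multiplicityType_prod_pow [Nontrivial R] {ι : Type*} [Fintype ι] {q : ι → R} {e : ι → ℕ}
    (hirr : ∀ i, Irreducible (q i)) (hassoc : Pairwise fun i j => ¬ Associated (q i) (q j))
    (he : ∀ i, e i ≠ 0) :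
    multiplicityType (∏ i, q i ^ e i) = Finset.univ.val.map e := by
  classical
  have hinj : Function.Injective fun i => Associates.mk (q i) := fun i j hij => by
    by_contra hne
    exact hassoc hne (Associates.mk_eq_mk_iff_associated.1 hij)
  have hfactors : (factors (∏ i, q i ^ e i)).map Associates.mk =
      ∑ i, e i • {Associates.mk (q i)} := by
    rw [map_mk_factors_eq_of_associated_prod (s := ∑ i, e i • {q i}) _
      (Finset.prod_ne_zero_iff.2 fun i _ => pow_ne_zero _ (hirr i).ne_zero)]
    · simp [← Multiset.coe_mapAddMonoidHom, map_sum, map_nsmul]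
    · simp [Multiset.prod_sum, Multiset.prod_nsmul]
    · simpa [Multiset.mem_sum, Multiset.mem_nsmul, he] using hirr
  have hcount (i : ι) : Multiset.count (Associates.mk (q i))
      (∑ j, e j • {Associates.mk (q j)}) = e i := by
    simp [Multiset.count_sum', Multiset.count_singleton, hinj.eq_iff]
  have hdedup : (∑ i, e i • {Associates.mk (q i)} : Multiset (Associates R)).dedup =
      Finset.univ.val.map fun i => Associates.mk (q i) := by
    refine (Multiset.Nodup.ext (Multiset.nodup_dedup _) (Finset.univ.nodup.map hinj)).2 fun a => ?_
    simp [Multiset.mem_sum, Multiset.mem_nsmul, he, eq_comm]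
  simp only [multiplicityType, hfactors, hdedup, Multiset.map_map, Function.comp_def, hcount]

end MultiplicityType

section LinearForm

variable {K : Type*} [Field K]

/-- The binary linear form `ax + by` attached to `v = (a, b)`. -/
def linearForm (v : K × K) : MvPolynomial (Fin 2) K := C v.1 * X 0 + C v.2 * X 1

theorem irreducible_linearForm {v : K × K} (hv : v ≠ 0) : Irreducible (linearForm v) := by
  let c : Fin 2 →₀ K := Finsupp.single 0 v.1 + Finsupp.single 1 v.2
  have hsum : linearForm v = sumSMulX c := by
    simp [c, linearForm, sumSMulX, smul_eq_C_mul]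
  obtain ⟨i, hi⟩ : ∃ i, c i ≠ 0 := by
    by_contra! h
    exact hv (Prod.ext (by simpa [c] using h 0) (by simpa [c] using h 1))
  rw [hsum]
  exact irreducible_sumSMulX c ⟨i, Finsupp.mem_support_iff.2 hi⟩
    fun r hr => isUnit_of_dvd_unit (hr i) (isUnit_iff_ne_zero.2 hi)

theorem fst_mul_snd_eq_of_associated_linearForm {v w : K × K}
    (h : Associated (linearForm v) (linearForm w)) : v.1 * w.2 = w.1 * v.2 := by
  have heval := (h.map (eval ![v.2, -v.1])).eq_zero_iff.1 (by
    simp [linearForm, mul_comm])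
  simp only [linearForm, map_add, map_mul, eval_C, eval_X, Matrix.cons_val_zero,
    Matrix.cons_val_one] at heval
  linear_combination -heval

theorem multiplicityType_C_mul_prod_linearForm {ι : Type*} [Fintype ι] {c : K} (hc : c ≠ 0)
    {v : ι → K × K} {e : ι → ℕ} (hv : ∀ i, v i ≠ 0)
    (hvv : Pairwise fun i j => (v i).1 * (v j).2 ≠ (v j).1 * (v i).2) (he : ∀ i, e i ≠ 0) :
    multiplicityType (C c * ∏ i, linearForm (v i) ^ e i) = Finset.univ.val.map e := by
  rw [multiplicityType_eq_of_associated
    (associated_unit_mul_left _ _ ((isUnit_iff_ne_zero.2 hc).map C))]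
  exact multiplicityType_prod_pow (fun i => irreducible_linearForm (hv i))
    (fun i j hij h => hvv hij (fst_mul_snd_eq_of_associated_linearForm h)) he

theorem aeval_linearForm (u v w : K × K) :
    aeval ![linearForm u, linearForm v] (linearForm w) = linearForm (w.1 • u + w.2 • v) := by
  simp only [linearForm, map_add, map_mul, aeval_X, algHom_C, algebraMap_eq, Matrix.cons_val_zero,
    Matrix.cons_val_one, Prod.fst_add, Prod.snd_add, Prod.smul_fst, Prod.smul_snd, smul_eq_mul]
  ring

theorem aeval_linearForm_comp_eq_id {u v u' v' : K × K}
    (hx : u'.1 • u + u'.2 • v = (1, 0)) (hy : v'.1 • u + v'.2 • v = (0, 1)) :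
    (aeval ![linearForm u, linearForm v]).comp (aeval ![linearForm u', linearForm v']) =
      AlgHom.id K (MvPolynomial (Fin 2) K) := by
  have hX : aeval ![linearForm u, linearForm v] (linearForm u') = X 0 := by
    rw [aeval_linearForm, hx]
    simp [linearForm]
  have hY : aeval ![linearForm u, linearForm v] (linearForm v') = X 1 := by
    rw [aeval_linearForm, hy]
    simp [linearForm]
  ext i : 1
  fin_cases i
  · simpa [-aeval_eq_bind₁] using hX
  · simpa [-aeval_eq_bind₁] using hY

/-- The substitution `x ↦ ax + by`, `y ↦ cx + dy`, as an automorphism of `K[x, y]`. -/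
def linearSubstEquiv {a b c d : K} (hdet : a * d - b * c ≠ 0) :
    MvPolynomial (Fin 2) K ≃ₐ[K] MvPolynomial (Fin 2) K :=
  let δ := a * d - b * c
  AlgEquiv.ofAlgHom
    (aeval ![linearForm (a, b), linearForm (c, d)])
    (aeval ![linearForm (d / δ, -b / δ), linearForm (-c / δ, a / δ)])
    (aeval_linearForm_comp_eq_id
      (by ext <;> simp [δ] <;> field_simp <;> grind)
      (by ext <;> simp [δ] <;> field_simp <;> grind))
    (aeval_linearForm_comp_eq_id
      (by ext <;> simp [δ] <;> field_simp <;> grind)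
      (by ext <;> simp [δ] <;> field_simp <;> grind))

theorem exists_ne_add_eq_mul_eq [IsAlgClosed K] [NeZero (2 : K)] {s p : K} (h : s ^ 2 ≠ 4 * p) :
    ∃ α β : K, α ≠ β ∧ α + β = s ∧ α * β = p := by
  obtain ⟨r, hr⟩ := IsAlgClosed.exists_eq_mul_self (s ^ 2 - 4 * p)
  have h2 : (2 : K) ≠ 0 := two_ne_zero
  refine ⟨(s + r) / 2, (s - r) / 2, fun heq => h ?_, by field_simp; ring, ?_⟩
  · field_simp at heq
    have hr0 : 2 * r = 0 := by linear_combination heq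
    obtain rfl : r = 0 := (mul_eq_zero.1 hr0).resolve_left h2
    linear_combination hr
  · field_simp
    linear_combination hr

theorem exists_quadratic_eq_linearForm_mul_linearForm [IsAlgClosed K] [NeZero (2 : K)] {s p : K}
    (hp : p ≠ 0) (h : s ^ 2 ≠ 4 * p) :
    ∃ α β : K, α ≠ 0 ∧ β ≠ 0 ∧ α ≠ β ∧
      C p * X 0 ^ 2 + C s * X 0 * X 1 + X 1 ^ 2 = linearForm (α, 1) * linearForm (β, 1) := by
  obtain ⟨α, β, hne, rfl, rfl⟩ := exists_ne_add_eq_mul_eq h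
  refine ⟨α, β, left_ne_zero_of_mul hp, right_ne_zero_of_mul hp, hne, ?_⟩
  simp only [linearForm, C_add, C_mul, C_1]
  ring

end LinearForm

section LinearConjugacy

theorem derivation_aeval {R S M σ : Type*} [CommSemiring R] [CommSemiring S] [Algebra R S]
    [AddCommMonoid M] [Module R M] [Module S M] [Fintype σ] (D : Derivation R S M)
    (f : σ → S) (p : MvPolynomial σ R) :
    D (aeval f p) = ∑ i, aeval f (pderiv i p) • D (f i) := by
  classical
  induction p using MvPolynomial.induction_on with
  | C r => simp
  | add p q hp hq => simp only [map_add, hp, hq, add_smul, Finset.sum_add_distrib]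
  | mul_X p i hp =>
    simp [Derivation.leibniz, hp, pderiv_X, add_smul, Finset.sum_add_distrib, Finset.smul_sum,
      mul_smul, -aeval_eq_bind₁, Pi.single_apply, apply_ite, ite_smul]

theorem Dpoly_comp2 (a₁ a₂ a₃ a₄ : ℂ) (P Q : P2) :
    Dpoly (comp2 a₁ a₂ a₃ a₄ P) (comp2 a₁ a₂ a₃ a₄ Q) =
      C (a₁ * a₄ - a₂ * a₃) * comp2 a₁ a₂ a₃ a₄ (Dpoly P Q) := by
  simp only [Dpoly, comp2, derivation_aeval, Fin.sum_univ_two, Matrix.cons_val_zero,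
    Matrix.cons_val_one, map_add, map_sub, map_mul, Derivation.leibniz, pderiv_C, pderiv_X_self,
    pderiv_X_of_ne zero_ne_one, pderiv_X_of_ne one_ne_zero, smul_eq_mul]
  ring

theorem Dpoly_linear_combination (a b c d : ℂ) (P Q : P2) :
    Dpoly (C a * P + C b * Q) (C c * P + C d * Q) = C (a * d - b * c) * Dpoly P Q := by
  simp only [Dpoly, map_add, map_sub, map_mul, Derivation.leibniz, pderiv_C, smul_eq_mul,
    mul_zero, add_zero]
  ring

theorem comp2_eq_linearSubstEquiv {a₁ a₂ a₃ a₄ : ℂ} (hdet : a₁ * a₄ - a₂ * a₃ ≠ 0) (p : P2) :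
    comp2 a₁ a₂ a₃ a₄ p = linearSubstEquiv hdet p := rfl

theorem LinConj.multiplicityType_Dpoly_eq {A B A' B' : P2} (h : LinConj A B A' B') :
    multiplicityType (Dpoly A B) = multiplicityType (Dpoly A' B') := by
  obtain ⟨a₁, a₂, a₃, a₄, lam, hdet, hlam, hA, hB⟩ := h
  have hD : C ((a₁ * a₄ - a₂ * a₃) ^ 2) * linearSubstEquiv hdet (Dpoly A B) =
      C (lam ^ 2) * Dpoly A' B' := by
    have hscale := Dpoly_linear_combination lam 0 0 lam A' B'
    have hpull := Dpoly_linear_combination a₁ a₃ a₂ a₄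
      (comp2 a₁ a₂ a₃ a₄ A) (comp2 a₁ a₂ a₃ a₄ B)
    simp only [map_zero, zero_mul, add_zero, zero_add, sub_zero, mul_zero] at hscale
    rw [hA, hB, hscale, Dpoly_comp2] at hpull
    rw [← comp2_eq_linearSubstEquiv, sq lam, hpull]
    simp only [map_sub, map_mul, map_pow]
    ring
  have hassoc : Associated (linearSubstEquiv hdet (Dpoly A B)) (Dpoly A' B') :=
    (associated_isUnit_mul_left_iff ((isUnit_iff_ne_zero.2 (pow_ne_zero 2 hdet)).map C)).1
      (hD ▸ associated_unit_mul_left _ _ ((isUnit_iff_ne_zero.2 (pow_ne_zero 2 hlam)).map C))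
  rw [← multiplicityType_map (linearSubstEquiv hdet).toMulEquiv]
  exact multiplicityType_eq_of_associated hassoc

end LinearConjugacy

section Inflection

theorem pderiv_ofNat {R σ : Type*} [CommSemiring R] (i : σ) (n : ℕ) [n.AtLeastTwo] :
    pderiv i (ofNat(n) : MvPolynomial σ R) = 0 :=
  Derivation.map_natCast (pderiv i) n

theorem Dpoly_A1_B1 : Dpoly A1 B1 = C 16 * (X 0 ^ 3 * X 1 ^ 3) := by
  simp only [Dpoly, A1, B1, map_neg, Derivation.leibniz_pow, pderiv_X_self,
    pderiv_X_of_ne zero_ne_one, pderiv_X_of_ne one_ne_zero, smul_eq_mul, nsmul_eq_mul,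
    Nat.cast_ofNat, Nat.add_one_sub_one, map_ofNat]
  ring

theorem Dpoly_A2_B2 : Dpoly A2 B2 = C (-24) * (X 0 ^ 2 * X 1 ^ 2 * (X 0 - X 1) ^ 2) := by
  simp only [Dpoly, A2, B2, map_sub, map_neg, Derivation.leibniz, Derivation.leibniz_pow,
    pderiv_ofNat, pderiv_X_self, pderiv_X_of_ne zero_ne_one, pderiv_X_of_ne one_ne_zero,
    smul_eq_mul, nsmul_eq_mul, Nat.cast_ofNat, Nat.add_one_sub_one, map_ofNat]
  ring

theorem Dpoly_A3_B3 : Dpoly A3 B3 = C 48 * (X 0 ^ 2 * X 1 * (X 0 + X 1) ^ 3) := by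
  simp only [Dpoly, A3, B3, map_add, map_neg, Derivation.leibniz, Derivation.leibniz_pow,
    pderiv_ofNat, pderiv_X_self, pderiv_X_of_ne zero_ne_one, pderiv_X_of_ne one_ne_zero,
    smul_eq_mul, nsmul_eq_mul, Nat.cast_ofNat, Nat.add_one_sub_one, map_ofNat]
  ring

theorem Dpoly_A4_B4 :
    Dpoly A4 B4 = C (-48) * (X 0 ^ 2 * X 1 ^ 2 * (X 0 ^ 2 + 3 * X 0 * X 1 + X 1 ^ 2)) := by
  simp only [Dpoly, A4, B4, map_add, map_neg, Derivation.leibniz, Derivation.leibniz_pow,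
    pderiv_ofNat, pderiv_X_self, pderiv_X_of_ne zero_ne_one, pderiv_X_of_ne one_ne_zero,
    smul_eq_mul, nsmul_eq_mul, Nat.cast_ofNat, Nat.add_one_sub_one, map_ofNat]
  ring

theorem Dpoly_A5_B5 :
    Dpoly A5 B5 = C (-48) * (X 0 ^ 3 * X 1 * (3 * X 0 ^ 2 + 3 * X 0 * X 1 + X 1 ^ 2)) := by
  simp only [Dpoly, A5, B5, map_add, map_neg, Derivation.leibniz, Derivation.leibniz_pow,
    pderiv_ofNat, pderiv_X_self, pderiv_X_of_ne zero_ne_one, pderiv_X_of_ne one_ne_zero,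
    smul_eq_mul, nsmul_eq_mul, Nat.cast_ofNat, Nat.add_one_sub_one, map_ofNat]
  ring

theorem multiplicityType_Dpoly_A1_B1 : multiplicityType (Dpoly A1 B1) = {3, 3} := by
  have hD : Dpoly A1 B1 = C 16 * ∏ i, linearForm (![(1, 0), (0, 1)] i) ^ ![3, 3] i := by
    rw [Dpoly_A1_B1]
    simp only [linearForm, Fin.prod_univ_two, Matrix.cons_val, C_0, C_1]
    ring
  rw [hD, multiplicityType_C_mul_prod_linearForm (by norm_num)]
  · rfl
  · simp [Fin.forall_fin_succ]
  · simp [Pairwise, Fin.forall_fin_succ]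
  · simp [Fin.forall_fin_succ]

theorem multiplicityType_Dpoly_A2_B2 : multiplicityType (Dpoly A2 B2) = {2, 2, 2} := by
  have hD : Dpoly A2 B2 =
      C (-24) * ∏ i, linearForm (![(1, 0), (0, 1), (1, -1)] i) ^ ![2, 2, 2] i := by
    rw [Dpoly_A2_B2]
    simp only [linearForm, Fin.prod_univ_three, Matrix.cons_val, C_0, C_1, C_neg]
    ring
  rw [hD, multiplicityType_C_mul_prod_linearForm (by norm_num)]
  · rfl
  · simp [Fin.forall_fin_succ]
  · simp [Pairwise, Fin.forall_fin_succ]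
  · simp [Fin.forall_fin_succ]

theorem multiplicityType_Dpoly_A3_B3 : multiplicityType (Dpoly A3 B3) = {2, 1, 3} := by
  have hD : Dpoly A3 B3 = C 48 * ∏ i, linearForm (![(1, 0), (0, 1), (1, 1)] i) ^ ![2, 1, 3] i := by
    rw [Dpoly_A3_B3]
    simp only [linearForm, Fin.prod_univ_three, Matrix.cons_val, C_0, C_1]
    ring
  rw [hD, multiplicityType_C_mul_prod_linearForm (by norm_num)]
  · rfl
  · simp [Fin.forall_fin_succ]
  · simp [Pairwise, Fin.forall_fin_succ]
  · simp [Fin.forall_fin_succ]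

theorem multiplicityType_Dpoly_A4_B4 : multiplicityType (Dpoly A4 B4) = {2, 2, 1, 1} := by
  obtain ⟨α, β, hα, hβ, hne, hquad⟩ :=
    exists_quadratic_eq_linearForm_mul_linearForm (K := ℂ) (s := 3) (p := 1) (by norm_num)
      (by norm_num)
  have hD : Dpoly A4 B4 =
      C (-48) * ∏ i, linearForm (![(1, 0), (0, 1), (α, 1), (β, 1)] i) ^ ![2, 2, 1, 1] i := by
    simp only [map_ofNat, C_1, one_mul] at hquad
    rw [Dpoly_A4_B4, hquad]
    simp only [linearForm, Fin.prod_univ_four, Matrix.cons_val, C_0, C_1]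
    ring
  rw [hD, multiplicityType_C_mul_prod_linearForm (by norm_num)]
  · rfl
  · simp [Fin.forall_fin_succ]
  · simp [Pairwise, Fin.forall_fin_succ, hne, hne.symm, hα, hα.symm, hβ, hβ.symm]
  · simp [Fin.forall_fin_succ]

theorem multiplicityType_Dpoly_A5_B5 : multiplicityType (Dpoly A5 B5) = {3, 1, 1, 1} := by
  obtain ⟨α, β, hα, hβ, hne, hquad⟩ :=
    exists_quadratic_eq_linearForm_mul_linearForm (K := ℂ) (s := 3) (p := 3) (by norm_num)
      (by norm_num)
  have hD : Dpoly A5 B5 =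
      C (-48) * ∏ i, linearForm (![(1, 0), (0, 1), (α, 1), (β, 1)] i) ^ ![3, 1, 1, 1] i := by
    simp only [map_ofNat] at hquad
    rw [Dpoly_A5_B5, hquad]
    simp only [linearForm, Fin.prod_univ_four, Matrix.cons_val, C_0, C_1]
    ring
  rw [hD, multiplicityType_C_mul_prod_linearForm (by norm_num)]
  · rfl
  · simp [Fin.forall_fin_succ]
  · simp [Pairwise, Fin.forall_fin_succ, hne, hne.symm, hα, hα.symm, hβ, hβ.symm]
  · simp [Fin.forall_fin_succ]

theorem multiplicityType_Dpoly_omegas (i : Fin 5) :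
    multiplicityType (Dpoly (omegas i).1 (omegas i).2) =
      ![{3, 3}, {2, 2, 2}, {2, 1, 3}, {2, 2, 1, 1}, {3, 1, 1, 1}] i := by
  fin_cases i
  exacts [multiplicityType_Dpoly_A1_B1, multiplicityType_Dpoly_A2_B2, multiplicityType_Dpoly_A3_B3,
    multiplicityType_Dpoly_A4_B4, multiplicityType_Dpoly_A5_B5]

end Inflection

/-- The five foliations `ω₁, …, ω₅` are pairwise not linearly conjugate. -/
theorem omegas_pairwise_not_linConj :
    ∀ i j : Fin 5, i ≠ j →
      ¬ LinConj (omegas i).1 (omegas i).2 (omegas j).1 (omegas j).2 := by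
  intro i j hij h
  have hinj : Function.Injective
      (![{3, 3}, {2, 2, 2}, {2, 1, 3}, {2, 2, 1, 1}, {3, 1, 1, 1}] : Fin 5 → Multiset ℕ) := by
    decide
  have htype := h.multiplicityType_Dpoly_eq
  rw [multiplicityType_Dpoly_omegas, multiplicityType_Dpoly_omegas] at htype
  exact hij (hinj htype)
end
end
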